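/- arXiv:2209.01826 — 2 statements merged into one kernel-verified Lean document; each statement's English description precedes it below -/
import Mathlib

section
/- Let n > 2k ≥ 4. If F and G are families of k-subsets of [n] that are cross-intersecting (F ∩ G ≠ ∅ for all F ∈ F, G ∈ G) and both non-trivial (each has empty total intersection), then |F| + |G| ≤ C(n,k) - 2·C(n-k,k) + C(n-2k,k) + 2. -/
open Finset

/-- Every member of `F` meets every member of `G`. -/
def CrossIntersecting (F G : Finset (Finset ℕ)) : Prop :=
  ∀ A ∈ F, ∀ B ∈ G, (A ∩ B).Nonempty

theorem CrossIntersecting.symm {F G : Finset (Finset ℕ)} (h : CrossIntersecting F G) :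
    CrossIntersecting G F := fun A hA B hB => by
  rw [inter_comm]; exact h B hB A hA

theorem CrossIntersecting.mono {F G F' G' : Finset (Finset ℕ)} (h : CrossIntersecting F G)
    (hF : F' ⊆ F) (hG : G' ⊆ G) : CrossIntersecting F' G' :=
  fun A hA B hB => h A (hF hA) B (hG hB)

theorem CrossIntersecting.member_nonMember {F G : Finset (Finset ℕ)}
    (h : CrossIntersecting F G) (x : ℕ) :
    CrossIntersecting (F.memberSubfamily x) (G.nonMemberSubfamily x) := by
  intro A hA B hB
  rw [mem_memberSubfamily] at hA
  rw [mem_nonMemberSubfamily] at hB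
  have := h _ hA.1 _ hB.1
  rwa [insert_inter_of_notMem hB.2] at this

theorem CrossIntersecting.nonMember_member {F G : Finset (Finset ℕ)}
    (h : CrossIntersecting F G) (x : ℕ) :
    CrossIntersecting (F.nonMemberSubfamily x) (G.memberSubfamily x) :=
  (h.symm.member_nonMember x).symm

theorem CrossIntersecting.nonMember_nonMember {F G : Finset (Finset ℕ)}
    (h : CrossIntersecting F G) (x : ℕ) :
    CrossIntersecting (F.nonMemberSubfamily x) (G.nonMemberSubfamily x) :=
  h.mono (filter_subset _ _) (filter_subset _ _)

theorem memberSubfamily_subset_powersetCard {F : Finset (Finset ℕ)} {V : Finset ℕ} {k : ℕ}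
    (hF : F ⊆ powersetCard (k + 1) V) (x : ℕ) :
    F.memberSubfamily x ⊆ powersetCard k (V.erase x) := by
  intro A hA
  rw [mem_memberSubfamily] at hA
  have h := mem_powersetCard.1 (hF hA.1)
  rw [card_insert_of_notMem hA.2] at h
  refine mem_powersetCard.2 ⟨fun y hy => mem_erase.2 ⟨?_, h.1 (mem_insert_of_mem hy)⟩, by omega⟩
  rintro rfl
  exact hA.2 hy

theorem nonMemberSubfamily_subset_powersetCard {F : Finset (Finset ℕ)} {V : Finset ℕ} {k : ℕ}
    (hF : F ⊆ powersetCard k V) (x : ℕ) :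
    F.nonMemberSubfamily x ⊆ powersetCard k (V.erase x) := by
  intro A hA
  rw [mem_nonMemberSubfamily] at hA
  have h := mem_powersetCard.1 (hF hA.1)
  exact mem_powersetCard.2 ⟨subset_erase.2 ⟨h.1, hA.2⟩, h.2⟩

theorem card_powersetCard_filter_disjoint {V A : Finset ℕ} (hA : A ⊆ V) (q : ℕ) :
    #{B ∈ powersetCard q V | Disjoint A B} = (#V - #A).choose q := by
  rw [← card_sdiff_of_subset hA, ← card_powersetCard]
  congr 1
  ext B
  simp only [mem_filter, mem_powersetCard, subset_sdiff]
  rw [disjoint_comm]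
  tauto

/-- The bound for cross-intersecting families of `p`-sets and `q`-sets obtained from the
biregular disjointness graph. -/
theorem CrossIntersecting.card_add_card_le_choose {V : Finset ℕ} {X Y : Finset (Finset ℕ)}
    {p q : ℕ} (hX : X ⊆ powersetCard p V) (hY : Y ⊆ powersetCard q V)
    (hXY : CrossIntersecting X Y) (hpq : p ≤ q) (hV : p + q ≤ #V) :
    #X + #Y ≤ (#V).choose q := by
  have h := card_mul_le_card_mul (s := X) (t := powersetCard q V \ Y)
    (m := (#V - p).choose q) (n := (#V - q).choose p) (fun A B => Disjoint A B) ?_ ?_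
  · have hle : (#V - q).choose p ≤ (#V - p).choose q := by
      obtain ⟨c, hc⟩ := Nat.exists_eq_add_of_le hV
      have e1 : #V - q = c + p := by omega
      have e2 : #V - p = c + q := by omega
      rw [e1, e2, Nat.choose_symm_add.symm, Nat.choose_symm_add.symm]
      exact Nat.choose_le_choose c (by omega)
    have hpos : 0 < (#V - p).choose q := Nat.choose_pos (by omega)
    have h2 : #X * (#V - p).choose q ≤ #(powersetCard q V \ Y) * (#V - p).choose q :=
      h.trans (Nat.mul_le_mul_left _ hle)
    have h3 := Nat.le_of_mul_le_mul_right h2 hpos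
    rw [card_sdiff_of_subset hY, card_powersetCard] at h3
    have h4 := card_le_card hY
    rw [card_powersetCard] at h4
    omega
  · intro A hA
    have hA' := mem_powersetCard.1 (hX hA)
    rw [← hA'.2, ← card_powersetCard_filter_disjoint hA'.1]
    refine card_le_card fun B hB => ?_
    rw [mem_filter] at hB
    rw [mem_bipartiteAbove, mem_sdiff]
    refine ⟨⟨hB.1, fun hBY => ?_⟩, hB.2⟩
    exact not_disjoint_iff_nonempty_inter.2 (hXY A hA B hBY) hB.2
  · intro B hB
    have hB' := mem_powersetCard.1 (mem_sdiff.1 hB).1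
    rw [← hB'.2, ← card_powersetCard_filter_disjoint hB'.1]
    refine card_le_card fun A hA => ?_
    rw [mem_bipartiteBelow] at hA
    exact mem_filter.2 ⟨hX hA.1, hA.2.symm⟩

theorem card_add_choose_le_of_forall_inter_nonempty {V B : Finset ℕ} {Y : Finset (Finset ℕ)}
    {b q : ℕ} (hY : Y ⊆ powersetCard b V) (hB : #B ≤ q) (h : ∀ S ∈ Y, (S ∩ B).Nonempty) :
    #Y + (#V - q).choose b ≤ (#V).choose b := by
  have hd : Disjoint Y {S ∈ powersetCard b V | Disjoint (B ∩ V) S} := by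
    rw [disjoint_left]
    intro S hS hS'
    rw [mem_filter] at hS'
    obtain ⟨x, hx⟩ := h S hS
    rw [mem_inter] at hx
    exact disjoint_left.1 hS'.2
      (mem_inter.2 ⟨hx.2, (mem_powersetCard.1 hS'.1).1 hx.1⟩) hx.1
  have h1 := card_le_card (union_subset hY (filter_subset _ _ :
    {S ∈ powersetCard b V | Disjoint (B ∩ V) S} ⊆ powersetCard b V))
  rw [card_union_of_disjoint hd, card_powersetCard_filter_disjoint inter_subset_right,
    card_powersetCard] at h1
  have h2 : (#V - q).choose b ≤ (#V - #(B ∩ V)).choose b :=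
    Nat.choose_le_choose b (by have := card_le_card (inter_subset_left : B ∩ V ⊆ B); omega)
  omega

/-- A Hilton–Milner type bound for families of `a`-sets and `b`-sets with `a < b`. -/
theorem CrossIntersecting.card_add_card_add_choose_le {b : ℕ} (a : ℕ) :
    ∀ {V : Finset ℕ} {X Y : Finset (Finset ℕ)}, X ⊆ powersetCard a V → Y ⊆ powersetCard b V →
    CrossIntersecting X Y → X.Nonempty → a < b → a + b ≤ #V →
    #X + #Y + (#V - a).choose b ≤ (#V).choose b + 1 := by
  induction a with
  | zero =>
    rintro V X Y hX - hXY ⟨A, hA⟩ - -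
    have hA0 : A = ∅ := card_eq_zero.1 (mem_powersetCard.1 (hX hA)).2
    have hY : Y = ∅ := eq_empty_of_forall_notMem fun B hB => by simpa [hA0] using hXY A hA B hB
    have := card_le_card hX
    simp only [card_powersetCard, Nat.choose_zero_right] at this
    simp only [hY, card_empty, Nat.sub_zero]
    omega
  | succ a ih =>
    rintro V X Y hX hY hXY ⟨A, hA⟩ hab hV
    have hA' := mem_powersetCard.1 (hX hA)
    obtain ⟨x, hx⟩ : A.Nonempty := card_pos.1 (by omega)
    have hVx := card_erase_of_mem (hA'.1 hx)
    obtain ⟨b, rfl⟩ : ∃ c, b = c + 1 := ⟨b - 1, by omega⟩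
    obtain ⟨N, hN⟩ : ∃ N, #V = N + 1 := ⟨#V - 1, by omega⟩
    have h1 := (hXY.nonMember_member x).card_add_card_le_choose
      (nonMemberSubfamily_subset_powersetCard hX x) (memberSubfamily_subset_powersetCard hY x)
      (by omega) (by omega)
    have h2 := ih (memberSubfamily_subset_powersetCard hX x)
      (nonMemberSubfamily_subset_powersetCard hY x) (hXY.member_nonMember x)
      ⟨A.erase x, by rw [mem_memberSubfamily, insert_erase hx]; exact ⟨hA, notMem_erase x A⟩⟩
      (by omega) (by omega)
    have h3 := card_memberSubfamily_add_card_nonMemberSubfamily x X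
    have h4 := card_memberSubfamily_add_card_nonMemberSubfamily x Y
    rw [hVx, hN, Nat.add_sub_cancel] at h1 h2
    rw [hN, Nat.choose_succ_succ', show N + 1 - (a + 1) = N - a by omega]
    omega

/-- The number of `b`-sets meeting a set `A` and, for each `x ∈ A`, a set of size at most `q`
avoiding `x`, is at most the number of `b`-sets meeting two disjoint sets of sizes `#A`, `q`. -/
theorem card_transversal_le {b q : ℕ} (A : Finset ℕ) :
    ∀ {V : Finset ℕ} {Y : Finset (Finset ℕ)}, A ⊆ V → #A + q ≤ #V →
    Y ⊆ powersetCard (b + 1) V → (∀ S ∈ Y, (S ∩ A).Nonempty) →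
    (∀ x ∈ A, ∃ B : Finset ℕ, x ∉ B ∧ #B ≤ q ∧ ∀ S ∈ Y, (S ∩ B).Nonempty) →
    #Y + (#V - #A).choose (b + 1) + (#V - q).choose (b + 1) ≤
      (#V).choose (b + 1) + (#V - q - #A).choose (b + 1) := by
  induction A using Finset.induction_on with
  | empty =>
    intro V Y _ _ _ hA _
    have hY : Y = ∅ := eq_empty_of_forall_notMem fun S hS => by simpa using hA S hS
    simp [hY]
  | insert x A hxA ih =>
    intro V Y hAV hV hY hA hB
    have hVx := card_erase_of_mem (hAV (mem_insert_self x A))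
    have hAc := card_insert_of_notMem hxA
    obtain ⟨N, hN⟩ : ∃ N, #V = N + 1 := ⟨#V - 1, by omega⟩
    obtain ⟨B, hxB, hBq, hBY⟩ := hB x (mem_insert_self x A)
    have h1 := card_add_choose_le_of_forall_inter_nonempty (B := B) (q := q)
      (memberSubfamily_subset_powersetCard hY x) hBq (fun S hS => by
        have := hBY _ (mem_memberSubfamily.1 hS).1
        rwa [insert_inter_of_notMem hxB] at this)
    have h2 := ih (V := V.erase x) (Y := Y.nonMemberSubfamily x)
      (subset_erase.2 ⟨(subset_insert x A).trans hAV, hxA⟩) (by omega)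
      (nonMemberSubfamily_subset_powersetCard hY x)
      (fun S hS => by
        rw [mem_nonMemberSubfamily] at hS
        have := hA S hS.1
        rwa [inter_insert_of_notMem hS.2] at this)
      (fun y hy => by
        obtain ⟨B, h1, h2, h3⟩ := hB y (mem_insert_of_mem hy)
        exact ⟨B, h1, h2, fun S hS => h3 S (mem_nonMemberSubfamily.1 hS).1⟩)
    have h3 := card_memberSubfamily_add_card_nonMemberSubfamily x Y
    rw [hVx, hN, Nat.add_sub_cancel] at h1 h2
    have e : N + 1 - q = (N - q) + 1 := by omega
    rw [hN, hAc, e, Nat.choose_succ_succ' N, Nat.choose_succ_succ' (N - q),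
      show N + 1 - (#A + 1) = N - #A by omega,
      show N - q + 1 - (#A + 1) = N - q - #A by omega]
    omega

/-- The bound of `card_transversal_le`, strengthened by adding a family `X` of smaller sets that
do not contain `A` and meet all the transversals. -/
theorem CrossIntersecting.card_add_card_transversal_le {b q : ℕ} (A : Finset ℕ) :
    ∀ {V : Finset ℕ} {X Y : Finset (Finset ℕ)} {c : ℕ}, A ⊆ V → #A + q ≤ #V →
    c < q → c < b → c + (b + 1) ≤ #V →
    X ⊆ powersetCard c V → Y ⊆ powersetCard (b + 1) V → CrossIntersecting X Y →
    (∀ S ∈ X, ¬ A ⊆ S) → (∀ S ∈ Y, (S ∩ A).Nonempty) →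
    (∀ x ∈ A, ∃ B : Finset ℕ, x ∉ B ∧ #B ≤ q ∧ ∀ S ∈ Y, (S ∩ B).Nonempty) →
    #X + #Y + (#V - #A).choose (b + 1) + (#V - q).choose (b + 1) ≤
      (#V).choose (b + 1) + (#V - q - #A).choose (b + 1) := by
  induction A using Finset.induction_on with
  | empty =>
    intro V X Y c _ _ _ _ _ _ _ _ hX hA _
    have hX : X = ∅ := eq_empty_of_forall_notMem fun S hS => by simpa using hX S hS
    have hY : Y = ∅ := eq_empty_of_forall_notMem fun S hS => by simpa using hA S hS
    simp [hX, hY]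
  | insert x A hxA ih =>
    intro V X Y c hAV hV hcq hcb hcV hX hY hXY hXA hA hB
    have hVx := card_erase_of_mem (hAV (mem_insert_self x A))
    have hAc := card_insert_of_notMem hxA
    obtain ⟨N, hN⟩ : ∃ N, #V = N + 1 := ⟨#V - 1, by omega⟩
    have hAV' : A ⊆ V.erase x := subset_erase.2 ⟨(subset_insert x A).trans hAV, hxA⟩
    have hA' : ∀ S ∈ Y.nonMemberSubfamily x, (S ∩ A).Nonempty := fun S hS => by
      rw [mem_nonMemberSubfamily] at hS
      have := hA S hS.1
      rwa [inter_insert_of_notMem hS.2] at this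
    have hB' : ∀ y ∈ A, ∃ B : Finset ℕ, y ∉ B ∧ #B ≤ q ∧
        ∀ S ∈ Y.nonMemberSubfamily x, (S ∩ B).Nonempty := fun y hy => by
      obtain ⟨B, h1, h2, h3⟩ := hB y (mem_insert_of_mem hy)
      exact ⟨B, h1, h2, fun S hS => h3 S (mem_nonMemberSubfamily.1 hS).1⟩
    have h1 : #(X.nonMemberSubfamily x) + #(Y.memberSubfamily x) + (N - q).choose b ≤
        N.choose b := by
      rcases (X.nonMemberSubfamily x).eq_empty_or_nonempty with h0 | h0
      · obtain ⟨B, hxB, hBq, hBY⟩ := hB x (mem_insert_self x A)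
        have h1 := card_add_choose_le_of_forall_inter_nonempty (B := B) (q := q)
          (memberSubfamily_subset_powersetCard hY x) hBq (fun S hS => by
            have := hBY _ (mem_memberSubfamily.1 hS).1
            rwa [insert_inter_of_notMem hxB] at this)
        rw [hVx, hN, Nat.add_sub_cancel] at h1
        rw [h0, card_empty]
        omega
      · have h1 := CrossIntersecting.card_add_card_add_choose_le c
          (nonMemberSubfamily_subset_powersetCard hX x)
          (memberSubfamily_subset_powersetCard hY x) (hXY.nonMember_member x) h0 hcb (by omega)
        rw [hVx, hN, Nat.add_sub_cancel] at h1
        obtain ⟨b, rfl⟩ : ∃ b', b = b' + 1 := ⟨b - 1, by omega⟩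
        have h2 : (N - c).choose (b + 1) = (N - c - 1).choose b + (N - c - 1).choose (b + 1) := by
          rw [← Nat.choose_succ_succ']
          congr 1
          omega
        have h3 : 0 < (N - c - 1).choose b := Nat.choose_pos (by omega)
        have h4 : (N - q).choose (b + 1) ≤ (N - c - 1).choose (b + 1) :=
          Nat.choose_le_choose _ (by omega)
        omega
    have h2 : #(X.memberSubfamily x) + #(Y.nonMemberSubfamily x) + (N - #A).choose (b + 1) +
        (N - q).choose (b + 1) ≤ N.choose (b + 1) + (N - q - #A).choose (b + 1) := by
      rcases c with _ | c
      · have h0 : X.memberSubfamily x = ∅ := eq_empty_of_forall_notMem fun S hS => by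
          have := (mem_powersetCard.1 (hX (mem_memberSubfamily.1 hS).1)).2
          simp at this
        have h2 := card_transversal_le A hAV' (q := q) (by omega)
          (nonMemberSubfamily_subset_powersetCard hY x) hA' hB'
        rw [hVx, hN, Nat.add_sub_cancel] at h2
        rw [h0, card_empty]
        omega
      · have h2 := ih hAV' (by omega) (by omega) (by omega) (by omega)
          (memberSubfamily_subset_powersetCard hX x)
          (nonMemberSubfamily_subset_powersetCard hY x) (hXY.member_nonMember x)
          (fun S hS hAS => hXA _ (mem_memberSubfamily.1 hS).1 (insert_subset_insert x hAS))
          hA' hB'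
        rwa [hVx, hN, Nat.add_sub_cancel] at h2
    have h3 := card_memberSubfamily_add_card_nonMemberSubfamily x Y
    have h4 := card_memberSubfamily_add_card_nonMemberSubfamily x X
    have e : N + 1 - q = (N - q) + 1 := by omega
    rw [hN, hAc, e, Nat.choose_succ_succ' N, Nat.choose_succ_succ' (N - q),
      show N + 1 - (#A + 1) = N - #A by omega,
      show N - q + 1 - (#A + 1) = N - q - #A by omega]
    omega

/-- Stability of a family under replacing an element of a member by a smaller positive one. -/
def Shifted (F : Finset (Finset ℕ)) : Prop :=
  ∀ A ∈ F, ∀ i j, 1 ≤ i → i < j → j ∈ A → i ∉ A → insert i (A.erase j) ∈ F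

theorem Icc_one_succ_erase (n : ℕ) : (Icc 1 (n + 1)).erase (n + 1) = Icc 1 n := by
  ext x
  simp only [mem_erase, mem_Icc]
  omega

theorem Shifted.nonMemberSubfamily {F : Finset (Finset ℕ)} {n k : ℕ} (h : Shifted F)
    (hF : F ⊆ powersetCard k (Icc 1 n)) : Shifted (F.nonMemberSubfamily n) := by
  intro A hA i j hi hij hj hiA
  rw [mem_nonMemberSubfamily] at hA ⊢
  have hjn := mem_Icc.1 ((mem_powersetCard.1 (hF hA.1)).1 hj)
  refine ⟨h A hA.1 i j hi hij hj hiA, ?_⟩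
  simp only [mem_insert, mem_erase, not_or, not_and]
  exact ⟨by omega, fun _ => hA.2⟩

theorem Shifted.memberSubfamily {F : Finset (Finset ℕ)} {n k : ℕ} (h : Shifted F)
    (hF : F ⊆ powersetCard k (Icc 1 n)) : Shifted (F.memberSubfamily n) := by
  intro A hA i j hi hij hj hiA
  rw [mem_memberSubfamily] at hA ⊢
  have hjn := mem_Icc.1 ((mem_powersetCard.1 (hF hA.1)).1 (mem_insert_of_mem hj))
  have hne : n ≠ j := by rintro rfl; exact hA.2 hj
  have := h _ hA.1 i j hi hij (mem_insert_of_mem hj)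
    (by rw [mem_insert, not_or]; exact ⟨by omega, hiA⟩)
  rw [erase_insert_of_ne hne, insert_comm] at this
  refine ⟨this, ?_⟩
  simp only [mem_insert, mem_erase, not_or, not_and]
  exact ⟨by omega, fun _ => hA.2⟩

theorem CrossIntersecting.member_member_of_shifted {F G : Finset (Finset ℕ)} {n r : ℕ}
    (h : CrossIntersecting F G) (hS : Shifted F)
    (hF : F ⊆ powersetCard (r + 1) (Icc 1 n)) (hG : G ⊆ powersetCard (r + 1) (Icc 1 n))
    (hn : 2 * (r + 1) ≤ n) :
    CrossIntersecting (F.memberSubfamily n) (G.memberSubfamily n) := by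
  intro A hA B hB
  rw [mem_memberSubfamily] at hA hB
  by_contra hAB
  rw [not_nonempty_iff_eq_empty] at hAB
  have hA' := mem_powersetCard.1 (hF hA.1)
  have hB' := mem_powersetCard.1 (hG hB.1)
  rw [card_insert_of_notMem hA.2] at hA'
  rw [card_insert_of_notMem hB.2] at hB'
  obtain ⟨y, hy, hyAB⟩ : ∃ y ∈ Icc 1 n, y ∉ insert n (A ∪ B) := by
    refine exists_mem_notMem_of_card_lt_card ?_
    have h1 := card_insert_le n (A ∪ B)
    have h2 := card_union_le A B
    rw [Nat.card_Icc]
    omega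
  simp only [mem_insert, mem_union, not_or] at hyAB
  rw [mem_Icc] at hy
  have h1 := hS _ hA.1 y n hy.1 (by omega) (mem_insert_self n A)
    (by simp only [mem_insert, not_or]; exact ⟨hyAB.1, hyAB.2.1⟩)
  rw [erase_insert hA.2] at h1
  obtain ⟨z, hz⟩ := h _ h1 _ hB.1
  simp only [mem_inter, mem_insert] at hz
  rcases hz with ⟨rfl | hzA, rfl | hzB⟩
  · exact hyAB.1 rfl
  · exact hyAB.2.2 hzB
  · exact hA.2 hzA
  · exact notMem_empty z (hAB ▸ mem_inter.2 ⟨hzA, hzB⟩)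

/-- The `r`-subsets of `{1, …, N}` with at least `d` elements in `{1, …, s}`. -/
def thickSets (s d N r : ℕ) : Finset (Finset ℕ) :=
  {A ∈ powersetCard r (Icc 1 N) | d ≤ #(A ∩ Icc 1 s)}

theorem mem_thickSets {s d N r : ℕ} {A : Finset ℕ} :
    A ∈ thickSets s d N r ↔ (A ⊆ Icc 1 N ∧ #A = r) ∧ d ≤ #(A ∩ Icc 1 s) := by
  rw [thickSets, mem_filter, mem_powersetCard]

theorem thickSets_subset (s d N r : ℕ) : thickSets s d N r ⊆ powersetCard r (Icc 1 N) :=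
  filter_subset _ _

theorem nonMemberSubfamily_subset_thickSets {F : Finset (Finset ℕ)} {s d N r : ℕ}
    (hF : F ⊆ thickSets s d (N + 1) r) :
    F.nonMemberSubfamily (N + 1) ⊆ thickSets s d N r := by
  intro A hA
  have h1 := nonMemberSubfamily_subset_powersetCard (hF.trans (thickSets_subset _ _ _ _)) (N + 1) hA
  rw [Icc_one_succ_erase] at h1
  exact mem_filter.2 ⟨h1, (mem_filter.1 (hF (mem_nonMemberSubfamily.1 hA).1)).2⟩

theorem memberSubfamily_subset_thickSets {F : Finset (Finset ℕ)} {s d N r : ℕ} (hs : s ≤ N)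
    (hF : F ⊆ thickSets s d (N + 1) (r + 1)) :
    F.memberSubfamily (N + 1) ⊆ thickSets s d N r := by
  intro A hA
  have h1 := memberSubfamily_subset_powersetCard (hF.trans (thickSets_subset _ _ _ _)) (N + 1) hA
  rw [Icc_one_succ_erase] at h1
  refine mem_filter.2 ⟨h1, ?_⟩
  have := (mem_filter.1 (hF (mem_memberSubfamily.1 hA).1)).2
  rwa [insert_inter_of_notMem (by rw [mem_Icc]; omega)] at this

theorem card_thickSets_add_le {s d N r : ℕ} (hs : s ≤ N) :
    #(thickSets s d N (r + 1)) + #(thickSets s d N r) ≤ #(thickSets s d (N + 1) (r + 1)) := by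
  rw [← card_memberSubfamily_add_card_nonMemberSubfamily (N + 1) (thickSets s d (N + 1) (r + 1)),
    add_comm]
  refine Nat.add_le_add (card_le_card fun A hA => ?_) (card_le_card fun A hA => ?_)
  · rw [mem_thickSets] at hA
    have hnA : N + 1 ∉ A := fun h => by have := mem_Icc.1 (hA.1.1 h); omega
    rw [mem_memberSubfamily, mem_thickSets, card_insert_of_notMem hnA,
      insert_inter_of_notMem (by rw [mem_Icc]; omega)]
    refine ⟨⟨⟨insert_subset (by simp) (hA.1.1.trans (Icc_subset_Icc_right (by omega))), ?_⟩,
      hA.2⟩, hnA⟩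
    rw [hA.1.2]
  · rw [mem_thickSets] at hA
    rw [mem_nonMemberSubfamily, mem_thickSets]
    exact ⟨⟨⟨hA.1.1.trans (Icc_subset_Icc_right (by omega)), hA.1.2⟩, hA.2⟩,
      fun h => by have := mem_Icc.1 (hA.1.1 h); omega⟩

theorem CrossIntersecting.card_add_card_le_card_thickSets {s d : ℕ} (hd : 1 ≤ d) (N : ℕ)
    (hsN : s ≤ N) : ∀ {r : ℕ} {F G : Finset (Finset ℕ)}, 2 * r ≤ N → r + d ≤ s →
    F ⊆ thickSets s d N r → G ⊆ thickSets s d N r → Shifted F → Shifted G →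
    CrossIntersecting F G → #F + #G ≤ #(thickSets s d N r) := by
  induction N, hsN using Nat.le_induction with
  | base =>
    intro r F G hr hrd hF hG _ _ hFG
    rcases (thickSets s d s r).eq_empty_or_nonempty with h0 | ⟨A, hA⟩
    · rw [h0, subset_empty] at hF hG
      simp [hF, hG]
    · have hall : thickSets s d s r = powersetCard r (Icc 1 s) := by
        rw [mem_thickSets] at hA
        rw [inter_eq_left.2 hA.1.1] at hA
        refine filter_true_of_mem fun B hB => ?_
        rw [mem_powersetCard] at hB
        rw [inter_eq_left.2 hB.1]
        omega
      rw [hall] at hF hG ⊢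
      have := hFG.card_add_card_le_choose hF hG le_rfl (by rw [Nat.card_Icc]; omega)
      rwa [card_powersetCard]
  | succ N hsN ih =>
    intro r F G hr hrd hF hG hSF hSG hFG
    have hF' := hF.trans (thickSets_subset _ _ _ _)
    have hG' := hG.trans (thickSets_subset _ _ _ _)
    rcases r with _ | r
    · have h0 : thickSets s d (N + 1) 0 = ∅ := eq_empty_of_forall_notMem fun A hA => by
        rw [mem_thickSets] at hA
        have := card_le_card (inter_subset_left : A ∩ Icc 1 s ⊆ A)
        omega
      rw [h0, subset_empty] at hF hG
      simp [hF, hG]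
    rcases hr.eq_or_lt with hr' | hr'
    · have hinj : Set.InjOn (fun A => Icc 1 (N + 1) \ A) (F : Set (Finset ℕ)) := by
        intro A hA B hB hAB
        have hA' := (mem_powersetCard.1 (hF' hA)).1
        have hB' := (mem_powersetCard.1 (hF' hB)).1
        rw [← Finset.sdiff_sdiff_eq_self hA', ← Finset.sdiff_sdiff_eq_self hB']
        exact congrArg (Icc 1 (N + 1) \ ·) hAB
      have hdisj : Disjoint (F.image fun A => Icc 1 (N + 1) \ A) G := by
        rw [disjoint_left]
        intro B hB hBG
        obtain ⟨A, hA, rfl⟩ := mem_image.1 hB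
        obtain ⟨x, hx⟩ := hFG A hA _ hBG
        simp only [mem_inter, mem_sdiff] at hx
        exact hx.2.2 hx.1
      rw [← card_image_of_injOn hinj, ← card_union_of_disjoint hdisj]
      refine card_le_card (union_subset (fun B hB => ?_) hG)
      obtain ⟨A, hA, rfl⟩ := mem_image.1 hB
      have hA' := mem_powersetCard.1 (hF' hA)
      rw [mem_thickSets, card_sdiff_of_subset hA'.1, Nat.card_Icc]
      refine ⟨⟨sdiff_subset, by omega⟩, ?_⟩
      have h1 : Icc 1 s \ A ⊆ Icc 1 (N + 1) \ A ∩ Icc 1 s := fun x hx => by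
        simp only [mem_sdiff, mem_inter, mem_Icc] at hx ⊢
        exact ⟨⟨by omega, hx.2⟩, hx.1⟩
      have h2 := card_le_card h1
      have h3 := le_card_sdiff A (Icc 1 s)
      rw [Nat.card_Icc] at h3
      omega
    · have h1 := ih (by omega) hrd (nonMemberSubfamily_subset_thickSets hF)
        (nonMemberSubfamily_subset_thickSets hG) (hSF.nonMemberSubfamily hF')
        (hSG.nonMemberSubfamily hG') (hFG.nonMember_nonMember _)
      have h2 := ih (by omega) (by omega) (memberSubfamily_subset_thickSets hsN hF)
        (memberSubfamily_subset_thickSets hsN hG) (hSF.memberSubfamily hF')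
        (hSG.memberSubfamily hG') (hFG.member_member_of_shifted hSF hF' hG' hr)
      have h3 := card_memberSubfamily_add_card_nonMemberSubfamily (N + 1) F
      have h4 := card_memberSubfamily_add_card_nonMemberSubfamily (N + 1) G
      have h5 := card_thickSets_add_le (d := d) (r := r) hsN
      omega

theorem CrossIntersecting.card_add_card_le_of_shifted {s d r : ℕ} (hd : 1 ≤ d)
    (hs : r + d ≤ s) (hs' : s ≤ 2 * (r + 1)) (f : ℕ → ℤ)
    (hf0 : ((2 * (r + 1)).choose (r + 1) : ℤ) ≤ f (2 * (r + 1)))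
    (hf : ∀ m, 2 * (r + 1) ≤ m → f m + #(thickSets s d m r) ≤ f (m + 1))
    (n : ℕ) (hn : 2 * (r + 1) ≤ n) : ∀ {F G : Finset (Finset ℕ)},
    F ⊆ thickSets s d n (r + 1) → G ⊆ thickSets s d n (r + 1) → Shifted F → Shifted G →
    CrossIntersecting F G → (#F + #G : ℤ) ≤ f n := by
  induction n, hn using Nat.le_induction with
  | base =>
    intro F G hF hG _ _ hFG
    have := hFG.card_add_card_le_choose (hF.trans (thickSets_subset _ _ _ _))
      (hG.trans (thickSets_subset _ _ _ _)) le_rfl (by rw [Nat.card_Icc]; omega)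
    rw [Nat.card_Icc, Nat.add_sub_cancel] at this
    exact le_trans (by exact_mod_cast this) hf0
  | succ m hm ih =>
    intro F G hF hG hSF hSG hFG
    have hF' := hF.trans (thickSets_subset _ _ _ _)
    have hG' := hG.trans (thickSets_subset _ _ _ _)
    have h1 := ih (nonMemberSubfamily_subset_thickSets hF)
      (nonMemberSubfamily_subset_thickSets hG) (hSF.nonMemberSubfamily hF')
      (hSG.nonMemberSubfamily hG') (hFG.nonMember_nonMember _)
    have h2 := CrossIntersecting.card_add_card_le_card_thickSets hd m (hs'.trans hm)
      (by omega) hs (memberSubfamily_subset_thickSets (hs'.trans hm) hF)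
      (memberSubfamily_subset_thickSets (hs'.trans hm) hG) (hSF.memberSubfamily hF')
      (hSG.memberSubfamily hG') (hFG.member_member_of_shifted hSF hF' hG' (by omega))
    have h3 := card_memberSubfamily_add_card_nonMemberSubfamily (m + 1) F
    have h4 := card_memberSubfamily_add_card_nonMemberSubfamily (m + 1) G
    have h5 := hf m hm
    omega

/-- Replace `j` by `i` in `A` when this produces a set outside `F`. -/
def shiftSet (i j : ℕ) (F : Finset (Finset ℕ)) (A : Finset ℕ) : Finset ℕ :=
  if j ∈ A ∧ i ∉ A ∧ insert i (A.erase j) ∉ F then insert i (A.erase j) else A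

/-- The `(i, j)`-shift of a family. -/
def shift (i j : ℕ) (F : Finset (Finset ℕ)) : Finset (Finset ℕ) :=
  F.image (shiftSet i j F)

theorem shiftSet_injOn (i j : ℕ) (F : Finset (Finset ℕ)) :
    Set.InjOn (shiftSet i j F) (F : Set (Finset ℕ)) := by
  intro A hA B hB hAB
  rw [mem_coe] at hA hB
  unfold shiftSet at hAB
  split_ifs at hAB with h1 h2 h2
  · have hA' : A = insert j ((insert i (A.erase j)).erase i) := by
      rw [erase_insert (by simp [h1.2.1]), insert_erase h1.1]
    have hB' : B = insert j ((insert i (B.erase j)).erase i) := by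
      rw [erase_insert (by simp [h2.2.1]), insert_erase h2.1]
    rw [hA', hB', hAB]
  · exact absurd (hAB ▸ hB) h1.2.2
  · exact absurd (hAB ▸ hA) h2.2.2
  · exact hAB

theorem card_shift (i j : ℕ) (F : Finset (Finset ℕ)) : #(shift i j F) = #F :=
  card_image_of_injOn (shiftSet_injOn i j F)

theorem shift_subset_powersetCard {i j n k : ℕ} {F : Finset (Finset ℕ)} (hi : 1 ≤ i)
    (hij : i < j) (hF : F ⊆ powersetCard k (Icc 1 n)) :
    shift i j F ⊆ powersetCard k (Icc 1 n) := by
  intro A hA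
  obtain ⟨B, hB, rfl⟩ := mem_image.1 hA
  unfold shiftSet
  split_ifs with h
  · have hB' := mem_powersetCard.1 (hF hB)
    have hj := mem_Icc.1 (hB'.1 h.1)
    rw [mem_powersetCard, card_insert_of_notMem (by simp [h.2.1]), card_erase_add_one h.1]
    exact ⟨insert_subset (mem_Icc.2 ⟨hi, by omega⟩) ((erase_subset _ _).trans hB'.1), hB'.2⟩
  · exact hF hB

theorem mem_shift {i j : ℕ} {F : Finset (Finset ℕ)} {A : Finset ℕ} (hA : A ∈ shift i j F) :
    (A ∈ F ∧ (j ∈ A → i ∉ A → insert i (A.erase j) ∈ F)) ∨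
      ∃ B ∈ F, j ∈ B ∧ i ∉ B ∧ A = insert i (B.erase j) := by
  obtain ⟨B, hB, rfl⟩ := mem_image.1 hA
  unfold shiftSet
  split_ifs with h
  · exact Or.inr ⟨B, hB, h.1, h.2.1, rfl⟩
  · refine Or.inl ⟨hB, fun h1 h2 => ?_⟩
    by_contra h3
    exact h ⟨h1, h2, h3⟩

theorem inter_insert_erase_nonempty {i j : ℕ} {F G : Finset (Finset ℕ)}
    (h : CrossIntersecting F G) {A B : Finset ℕ} (hA : A ∈ F)
    (hA' : j ∈ A → i ∉ A → insert i (A.erase j) ∈ F) (hB : B ∈ G) (hi : i ∉ B) :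
    (A ∩ insert i (B.erase j)).Nonempty := by
  by_cases hiA : i ∈ A
  · exact ⟨i, mem_inter.2 ⟨hiA, mem_insert_self _ _⟩⟩
  obtain ⟨x, hx⟩ := h A hA B hB
  rw [mem_inter] at hx
  by_cases hxj : x = j
  · subst hxj
    obtain ⟨y, hy⟩ := h _ (hA' hx.1 hiA) B hB
    rw [mem_inter, mem_insert, mem_erase] at hy
    rcases hy with ⟨rfl | hyA, hyB⟩
    · exact absurd hyB hi
    · exact ⟨y, mem_inter.2 ⟨hyA.2, mem_insert_of_mem (mem_erase.2 ⟨hyA.1, hyB⟩)⟩⟩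
  · exact ⟨x, mem_inter.2 ⟨hx.1, mem_insert_of_mem (mem_erase.2 ⟨hxj, hx.2⟩)⟩⟩

theorem CrossIntersecting.shift {F G : Finset (Finset ℕ)} (h : CrossIntersecting F G)
    (i j : ℕ) : CrossIntersecting (shift i j F) (shift i j G) := by
  intro A hA B hB
  rcases mem_shift hA with ⟨hAF, hA'⟩ | ⟨A', hA', hjA, hiA, rfl⟩ <;>
    rcases mem_shift hB with ⟨hBG, hB'⟩ | ⟨B', hB', hjB, hiB, rfl⟩
  · exact h A hAF B hBG
  · exact inter_insert_erase_nonempty h hAF hA' hB' hiB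
  · rw [inter_comm]
    exact inter_insert_erase_nonempty h.symm hBG hB' hA' hiA
  · exact ⟨i, mem_inter.2 ⟨mem_insert_self _ _, mem_insert_self _ _⟩⟩

theorem forall_exists_notMem_shift {F : Finset (Finset ℕ)} {i j : ℕ}
    (hF : ∀ x, ∃ A ∈ F, x ∉ A) (hij : ∃ A ∈ F, i ∉ A ∧ j ∉ A) :
    ∀ x, ∃ A ∈ shift i j F, x ∉ A := by
  intro x
  obtain ⟨A, hA, hxA, hxi⟩ : ∃ A ∈ F, x ∉ A ∧ (x = i → j ∉ A) := by
    by_cases hxi : x = i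
    · obtain ⟨A, hA, h1, h2⟩ := hij
      exact ⟨A, hA, hxi ▸ h1, fun _ => h2⟩
    · obtain ⟨A, hA, h⟩ := hF x
      exact ⟨A, hA, h, fun h' => absurd h' hxi⟩
  refine ⟨_, mem_image_of_mem _ hA, ?_⟩
  unfold shiftSet
  split_ifs with h
  · rw [mem_insert, mem_erase, not_or]
    exact ⟨fun h' => hxi h' h.1, fun h' => hxA h'.2⟩
  · exact hxA

theorem sum_insert_erase_lt {i j : ℕ} {A : Finset ℕ} (hij : i < j) (hj : j ∈ A) (hi : i ∉ A) :
    ∑ x ∈ insert i (A.erase j), x < ∑ x ∈ A, x := by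
  rw [sum_insert (by simp [hi]), ← add_sum_erase A _ hj]
  omega

theorem sum_shiftSet_le {i j : ℕ} (hij : i < j) (F : Finset (Finset ℕ)) (A : Finset ℕ) :
    ∑ x ∈ shiftSet i j F A, x ≤ ∑ x ∈ A, x := by
  unfold shiftSet
  split_ifs with h
  · exact (sum_insert_erase_lt hij h.1 h.2.1).le
  · exact le_rfl

theorem sum_shift_le {i j : ℕ} (hij : i < j) (F : Finset (Finset ℕ)) :
    ∑ A ∈ shift i j F, ∑ x ∈ A, x ≤ ∑ A ∈ F, ∑ x ∈ A, x := by
  rw [shift, sum_image (shiftSet_injOn i j F)]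
  exact sum_le_sum fun A _ => sum_shiftSet_le hij F A

theorem exists_sum_shift_lt {F : Finset (Finset ℕ)} (hF : ¬ Shifted F) :
    ∃ i j, 1 ≤ i ∧ i < j ∧
      ∑ A ∈ shift i j F, ∑ x ∈ A, x < ∑ A ∈ F, ∑ x ∈ A, x := by
  unfold Shifted at hF
  push Not at hF
  obtain ⟨A, hA, i, j, hi, hij, hj, hiA, h⟩ := hF
  refine ⟨i, j, hi, hij, ?_⟩
  rw [shift, sum_image (shiftSet_injOn i j F)]
  refine sum_lt_sum (fun A _ => sum_shiftSet_le hij F A) ⟨A, hA, ?_⟩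
  rw [shiftSet, if_pos ⟨hj, hiA, h⟩]
  exact sum_insert_erase_lt hij hj hiA

/-- A property of pairs of families that is preserved by shifting is inherited by some shifted
pair. -/
theorem exists_shifted {Q : Finset (Finset ℕ) → Finset (Finset ℕ) → Prop}
    (hQ : ∀ F G i j, Q F G → 1 ≤ i → i < j → Q (shift i j F) (shift i j G))
    {F G : Finset (Finset ℕ)} (h : Q F G) : ∃ F' G', Q F' G' ∧ Shifted F' ∧ Shifted G' := by
  induction hw : ∑ A ∈ F, ∑ x ∈ A, x + ∑ A ∈ G, ∑ x ∈ A, x using Nat.strong_induction_on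
    generalizing F G with
  | _ w ih =>
    by_cases hF : Shifted F
    · by_cases hG : Shifted G
      · exact ⟨F, G, h, hF, hG⟩
      · obtain ⟨i, j, hi, hij, hlt⟩ := exists_sum_shift_lt hG
        exact ih _ (by have := sum_shift_le hij F; omega) (hQ F G i j h hi hij) rfl
    · obtain ⟨i, j, hi, hij, hlt⟩ := exists_sum_shift_lt hF
      exact ih _ (by have := sum_shift_le hij G; omega) (hQ F G i j h hi hij) rfl

theorem Shifted.Icc_mem {F : Finset (Finset ℕ)} {n k t : ℕ} (hS : Shifted F)
    (hF : F ⊆ powersetCard k (Icc 1 n)) {A : Finset ℕ} (hA : A ∈ F) (hAt : ∀ x ∈ A, t < x) :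
    Icc (t + 1) (t + k) ∈ F := by
  obtain ⟨B, hB, hmin⟩ := exists_min_image {B ∈ F | ∀ x ∈ B, t < x} (fun B => ∑ x ∈ B, x)
    ⟨A, mem_filter.2 ⟨hA, hAt⟩⟩
  rw [mem_filter] at hB
  have hcard : #(Icc (t + 1) (t + k)) = #B := by
    rw [Nat.card_Icc, (mem_powersetCard.1 (hF hB.1)).2]
    omega
  by_contra hne
  have hneq : Icc (t + 1) (t + k) ≠ B := fun h => hne (h ▸ hB.1)
  obtain ⟨i, hi, hiB⟩ := not_subset.1 fun h => hneq (eq_of_subset_of_card_le h hcard.ge)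
  obtain ⟨j, hjB, hj⟩ := not_subset.1 fun h => hneq (eq_of_subset_of_card_le h hcard.le).symm
  rw [mem_Icc] at hi hj
  have htj := hB.2 j hjB
  have hij : i < j := by omega
  have := hmin (insert i (B.erase j)) (mem_filter.2 ⟨hS B hB.1 i j (by omega) hij hjB hiB,
    fun x hx => by
      rcases mem_insert.1 hx with rfl | hx
      · omega
      · exact hB.2 x (mem_of_mem_erase hx)⟩)
  exact absurd this (not_le.2 (sum_insert_erase_lt hij hjB hiB))

theorem CrossIntersecting.hilton_milner_Icc {F G : Finset (Finset ℕ)} {n r : ℕ}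
    (hF : F ⊆ powersetCard (r + 1) (Icc 1 n)) (hG : G ⊆ powersetCard (r + 1) (Icc 1 n))
    (hFG : CrossIntersecting F G) (hF0 : F.Nonempty) (hG0 : G.Nonempty)
    (hn : 2 * (r + 1) ≤ n) :
    (#F + #G : ℤ) ≤ n.choose (r + 1) - (n - (r + 1)).choose (r + 1) + 1 := by
  obtain ⟨F', G', ⟨hF', hG', hFG', hF0', hG0', hc⟩, hSF, hSG⟩ := exists_shifted
    (Q := fun F' G' => F' ⊆ powersetCard (r + 1) (Icc 1 n) ∧
      G' ⊆ powersetCard (r + 1) (Icc 1 n) ∧ CrossIntersecting F' G' ∧ F'.Nonempty ∧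
      G'.Nonempty ∧ #F' + #G' = #F + #G)
    (fun F' G' i j ⟨h1, h2, h3, h4, h5, h6⟩ hi hij =>
      ⟨shift_subset_powersetCard hi hij h1, shift_subset_powersetCard hi hij h2, h3.shift i j,
        h4.image _, h5.image _, by rw [card_shift, card_shift, h6]⟩)
    ⟨hF, hG, hFG, hF0, hG0, rfl⟩
  have hmem : ∀ {H : Finset (Finset ℕ)}, H ⊆ powersetCard (r + 1) (Icc 1 n) → Shifted H →
      H.Nonempty → Icc 1 (r + 1) ∈ H := by
    rintro H hH hSH ⟨A, hA⟩
    have := hSH.Icc_mem (t := 0) hH hA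
      (fun x hx => (mem_Icc.1 ((mem_powersetCard.1 (hH hA)).1 hx)).1)
    rwa [zero_add, zero_add] at this
  have := CrossIntersecting.card_add_card_le_of_shifted (s := r + 1) (d := 1) (r := r) le_rfl
    le_rfl (by omega)
    (fun m => m.choose (r + 1) - (m - (r + 1)).choose (r + 1) + 1) ?_ ?_ n hn
    (fun A hA => mem_filter.2 ⟨hF' hA, card_pos.2 (hFG' A hA _ (hmem hG' hSG hG0'))⟩)
    (fun A hA => mem_filter.2 ⟨hG' hA, card_pos.2 (hFG'.symm A hA _ (hmem hF' hSF hF0'))⟩)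
    hSF hSG hFG'
  · rw [← Nat.cast_add, hc, Nat.cast_add] at this
    exact this
  · rw [show 2 * (r + 1) - (r + 1) = r + 1 by omega, Nat.choose_self]
    simp
  · intro m hm
    have h1 := card_add_choose_le_of_forall_inter_nonempty (B := Icc 1 (r + 1)) (q := r + 1)
      (thickSets_subset (r + 1) 1 m r) (by rw [Nat.card_Icc]; omega)
      (fun S hS => card_pos.1 (mem_thickSets.1 hS).2)
    rw [Nat.card_Icc, Nat.add_sub_cancel] at h1
    rw [show m + 1 - (r + 1) = m - (r + 1) + 1 by omega, Nat.choose_succ_succ' m,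
      Nat.choose_succ_succ' (m - (r + 1))]
    push_cast
    omega

/-- The Hilton–Milner bound for non-empty cross-intersecting uniform families. -/
theorem CrossIntersecting.hilton_milner {V : Finset ℕ} {F G : Finset (Finset ℕ)} {k : ℕ}
    (hF : F ⊆ powersetCard k V) (hG : G ⊆ powersetCard k V)
    (hFG : CrossIntersecting F G) (hF0 : F.Nonempty) (hG0 : G.Nonempty)
    (hV : 2 * k ≤ #V) : #F + #G + (#V - k).choose k ≤ (#V).choose k + 1 := by
  rcases k with _ | r
  · obtain ⟨A, hA⟩ := hF0
    obtain ⟨B, hB⟩ := hG0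
    have hA0 : A = ∅ := card_eq_zero.1 (mem_powersetCard.1 (hF hA)).2
    have := hFG A hA B hB
    simp [hA0] at this
  have e : V ≃ Icc 1 (#V) := equivOfCardEq (by rw [Nat.card_Icc]; omega)
  let g : ℕ → ℕ := fun x => if h : x ∈ V then e ⟨x, h⟩ else 0
  have hg : ∀ x (h : x ∈ V), g x = e ⟨x, h⟩ := fun x h => dif_pos h
  have hginj : Set.InjOn g V := by
    intro x hx y hy hxy
    rw [hg x hx, hg y hy] at hxy
    simpa using e.injective (Subtype.ext hxy)
  have himg : ∀ {H : Finset (Finset ℕ)}, H ⊆ powersetCard (r + 1) V →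
      H.image (image g) ⊆ powersetCard (r + 1) (Icc 1 (#V)) ∧ #(H.image (image g)) = #H := by
    intro H hH
    constructor
    · intro B hB
      obtain ⟨A, hA, rfl⟩ := mem_image.1 hB
      have hA' := mem_powersetCard.1 (hH hA)
      rw [mem_powersetCard, card_image_of_injOn (hginj.mono (by exact_mod_cast hA'.1))]
      refine ⟨fun y hy => ?_, hA'.2⟩
      obtain ⟨x, hx, rfl⟩ := mem_image.1 hy
      rw [hg x (hA'.1 hx)]
      exact (e _).2
    · refine card_image_of_injOn ((image_injOn_powerset_of_injOn hginj).mono fun A hA => ?_)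
      exact mem_coe.2 (mem_powerset.2 (mem_powersetCard.1 (hH hA)).1)
  have hcross : CrossIntersecting (F.image (image g)) (G.image (image g)) := by
    intro A' hA' B' hB'
    obtain ⟨A, hA, rfl⟩ := mem_image.1 hA'
    obtain ⟨B, hB, rfl⟩ := mem_image.1 hB'
    obtain ⟨x, hx⟩ := hFG A hA B hB
    rw [mem_inter] at hx
    exact ⟨g x, mem_inter.2 ⟨mem_image_of_mem g hx.1, mem_image_of_mem g hx.2⟩⟩
  have := hcross.hilton_milner_Icc (himg hF).1 (himg hG).1 (hF0.image _) (hG0.image _) hV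
  rw [(himg hF).2, (himg hG).2] at this
  omega

theorem choose_add_choose_sub_le {N r : ℕ} (hN : 2 * r + 1 ≤ N) :
    N.choose r + (N - r).choose (r + 1) ≤ N.choose (r + 1) + 1 := by
  have h := CrossIntersecting.card_add_card_add_choose_le r (b := r + 1) (V := range N)
    (X := powersetCard r (range N)) (Y := ∅) Subset.rfl (empty_subset _)
    (fun _ _ B hB => absurd hB (notMem_empty B))
    (powersetCard_nonempty.2 (by rw [card_range]; omega)) (by omega) (by rw [card_range]; omega)
  rwa [card_powersetCard, card_range, card_empty, add_zero] at h

theorem CrossIntersecting.card_add_card_transversal_le_add_two {W : Finset ℕ} {r : ℕ}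
    {X Y : Finset (Finset ℕ)} (hW : 2 * r + 3 ≤ #W)
    (hX : X ⊆ powersetCard (r + 1) W) (hY : Y ⊆ powersetCard (r + 2) W)
    (hXY : CrossIntersecting X Y) (hX0 : X.Nonempty) (hY0 : Y.Nonempty)
    (hB : ∀ x ∈ W, ∃ B : Finset ℕ, x ∉ B ∧ #B ≤ r + 1 ∧ ∀ S ∈ Y, (S ∩ B).Nonempty) :
    #X + #Y + 2 * (#W - (r + 1)).choose (r + 2) ≤
      (#W).choose (r + 2) + (#W - 2 * (r + 1)).choose (r + 2) + 2 := by
  obtain ⟨A, hA⟩ := hX0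
  obtain ⟨C, hC⟩ := hY0
  obtain ⟨x, hx⟩ := hXY A hA C hC
  rw [mem_inter] at hx
  have hA' := mem_powersetCard.1 (hX hA)
  have hxW := hA'.1 hx.1
  have hWx := card_erase_of_mem hxW
  have hAx := card_erase_of_mem hx.1
  obtain ⟨N, hN⟩ : ∃ N, #W = N + 1 := ⟨#W - 1, by omega⟩
  have hAX : A.erase x ∈ X.memberSubfamily x := by
    rw [mem_memberSubfamily, insert_erase hx.1]
    exact ⟨hA, notMem_erase x A⟩
  have h1 : #(X.nonMemberSubfamily x) + #(Y.memberSubfamily x) +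
      (N - (r + 1)).choose (r + 1) ≤ N.choose (r + 1) + 1 := by
    rcases (X.nonMemberSubfamily x).eq_empty_or_nonempty with h0 | h0
    · obtain ⟨B, hxB, hBq, hBY⟩ := hB x hxW
      have h1 := card_add_choose_le_of_forall_inter_nonempty (B := B) (q := r + 1)
        (memberSubfamily_subset_powersetCard hY x) hBq (fun S hS => by
          have := hBY _ (mem_memberSubfamily.1 hS).1
          rwa [insert_inter_of_notMem hxB] at this)
      rw [hWx, hN, Nat.add_sub_cancel] at h1
      rw [h0, card_empty]
      omega
    · have h1 := (hXY.nonMember_member x).hilton_milner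
        (nonMemberSubfamily_subset_powersetCard hX x)
        (memberSubfamily_subset_powersetCard hY x) h0
        ⟨C.erase x, by
          rw [mem_memberSubfamily, insert_erase hx.2]; exact ⟨hC, notMem_erase x C⟩⟩
        (by omega)
      rwa [hWx, hN, Nat.add_sub_cancel] at h1
  have h2 := CrossIntersecting.card_add_card_transversal_le (A.erase x) (V := W.erase x)
    (b := r + 1) (q := r + 1) (c := r) (X := (X.memberSubfamily x).erase (A.erase x))
    (erase_subset_erase x hA'.1) (by omega) (by omega) (by omega) (by omega)
    ((erase_subset _ _).trans (memberSubfamily_subset_powersetCard hX x))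
    (nonMemberSubfamily_subset_powersetCard hY x)
    ((hXY.member_nonMember x).mono (erase_subset _ _) Subset.rfl)
    (fun S hS hAS => by
      rw [mem_erase] at hS
      have := (mem_powersetCard.1 (memberSubfamily_subset_powersetCard hX x hS.2)).2
      exact hS.1 (eq_of_subset_of_card_le hAS (by omega)).symm)
    (fun S hS => (hXY.member_nonMember x).symm S hS _ hAX)
    (fun y hy => by
      obtain ⟨B, h1, h2, h3⟩ := hB y (hA'.1 (mem_of_mem_erase hy))
      exact ⟨B, h1, h2, fun S hS => h3 S (mem_nonMemberSubfamily.1 hS).1⟩)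
  rw [card_erase_of_mem hAX, hWx, hAx, hA'.2, hN] at h2
  have h3 := card_memberSubfamily_add_card_nonMemberSubfamily x X
  have h4 := card_memberSubfamily_add_card_nonMemberSubfamily x Y
  have h5 : 0 < #(X.memberSubfamily x) := card_pos.2 ⟨_, hAX⟩
  have e1 : N + 1 - 1 = N := by omega
  have e2 : N - (r + 1 - 1) = N - (r + 1) + 1 := by omega
  have e3 : N - (r + 1) - (r + 1 - 1) = N + 1 - 2 * (r + 1) := by omega
  have e4 : N + 1 - (r + 1) = N - (r + 1) + 1 := by omega
  rw [e1, e2, e3, Nat.choose_succ_succ' (N - (r + 1))] at h2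
  rw [hN, e4, Nat.choose_succ_succ' (N - (r + 1)), Nat.choose_succ_succ' N]
  simp only [show r + 1 + 1 = r + 2 from rfl] at h2 ⊢
  omega

/-- The contribution of the sets not containing a pair `{i, j}` of elements that meets all members
of one of the families; here `F₁₂`, `F₁`, `F₂` and `G₁`, `G₂`, `G₀` are the links. -/
theorem card_links_le {W : Finset ℕ} {r : ℕ} {F₁₂ F₁ F₂ G₁ G₂ G₀ : Finset (Finset ℕ)}
    (hW : 2 * r + 3 ≤ #W) (hF₁₂ : F₁₂ ⊆ powersetCard r W)
    (hF₁ : F₁ ⊆ powersetCard (r + 1) W) (hF₂ : F₂ ⊆ powersetCard (r + 1) W)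
    (hG₁ : G₁ ⊆ powersetCard (r + 1) W) (hG₂ : G₂ ⊆ powersetCard (r + 1) W)
    (hG₀ : G₀ ⊆ powersetCard (r + 2) W)
    (h₁₂ : CrossIntersecting F₁ G₂) (h₂₁ : CrossIntersecting F₂ G₁)
    (h₁₀ : CrossIntersecting F₁ G₀) (h₂₀ : CrossIntersecting F₂ G₀)
    (h₀ : CrossIntersecting F₁₂ G₀) (hF₁0 : F₁.Nonempty) (hF₂0 : F₂.Nonempty)
    (hG₁0 : G₁ = ∅ → G₀.Nonempty) (hG₂0 : G₂ = ∅ → G₀.Nonempty)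
    (hB : ∀ x ∈ W, ∃ B : Finset ℕ, x ∉ B ∧ #B ≤ r + 1 ∧ ∀ S ∈ G₀, (S ∩ B).Nonempty) :
    #F₁₂ + #F₁ + #F₂ + #G₁ + #G₂ + #G₀ +
      2 * ((#W - (r + 1)).choose (r + 1) + (#W - (r + 1)).choose (r + 2)) ≤
      2 * (#W).choose (r + 1) + (#W).choose (r + 2) + (#W - 2 * (r + 1)).choose (r + 2) + 2 := by
  wlog h : G₁ = ∅ → G₂ = ∅ generalizing F₁ F₂ G₁ G₂
  · have := this hF₂ hF₁ hG₂ hG₁ h₂₁ h₁₂ h₂₀ h₁₀ hF₂0 hF₁0 hG₂0 hG₁0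
      (fun _ => by by_contra h'; exact h fun h'' => absurd h'' h')
    omega
  rcases G₂.eq_empty_or_nonempty with hG₂e | hG₂n
  · obtain ⟨C, hC⟩ := hG₂0 hG₂e
    have h1 := h₁₀.card_add_card_transversal_le_add_two hW hF₁ hG₀ hF₁0 ⟨C, hC⟩ hB
    have hCc := (mem_powersetCard.1 (hG₀ hC)).2
    have h2 := card_add_choose_le_of_forall_inter_nonempty hF₁₂ hCc.le
      (fun S hS => h₀ S hS C hC)
    have h3 := choose_add_choose_sub_le (N := #W) (r := r) (by omega)
    have e1 : #W - r = #W - (r + 1) + 1 := by omega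
    have e2 : #W - (r + 1) = #W - (r + 2) + 1 := by omega
    rw [e1, Nat.choose_succ_succ'] at h3
    have p1 : 0 < (#W - (r + 1)).choose r := Nat.choose_pos (by omega)
    have p2 : 0 < (#W - (r + 2)).choose r := Nat.choose_pos (by omega)
    rw [hG₂e, card_empty]
    rcases G₁.eq_empty_or_nonempty with hG₁e | hG₁n
    · have h4 := card_add_choose_le_of_forall_inter_nonempty hF₂ hCc.le
        (fun S hS => h₂₀ S hS C hC)
      have h5 : (#W - (r + 1)).choose (r + 1) =
          (#W - (r + 2)).choose r + (#W - (r + 2)).choose (r + 1) := by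
        rw [e2, Nat.choose_succ_succ']
      rw [hG₁e, card_empty]
      omega
    · have h4 := h₂₁.hilton_milner hF₂ hG₁ hF₂0 hG₁n (by omega)
      omega
  · have hG₁n : G₁.Nonempty := nonempty_iff_ne_empty.2 fun h' => hG₂n.ne_empty (h h')
    have h1 := h₁₂.hilton_milner hF₁ hG₂ hF₁0 hG₂n (by omega)
    have h2 := h₂₁.hilton_milner hF₂ hG₁ hF₂0 hG₁n (by omega)
    obtain ⟨A, hA⟩ := hF₁0
    have hA' := mem_powersetCard.1 (hF₁ hA)
    have h3 := CrossIntersecting.card_add_card_transversal_le A (b := r + 1) (q := r + 1)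
      hA'.1 (by omega) (by omega) (by omega) (by omega) hF₁₂ hG₀ h₀
      (fun S hS hAS => by
        have h1 := card_le_card hAS
        have h2 := (mem_powersetCard.1 (hF₁₂ hS)).2
        omega)
      (fun S hS => h₁₀.symm S hS A hA) (fun x hx => hB x (hA'.1 hx))
    rw [hA'.2, show #W - (r + 1) - (r + 1) = #W - 2 * (r + 1) by omega] at h3
    simp only [show r + 1 + 1 = r + 2 from rfl] at h3
    omega

theorem exists_erase_mem_of_pair {F : Finset (Finset ℕ)} {i j : ℕ}
    (hpair : ∀ A ∈ F, i ∈ A ∨ j ∈ A) (hF : ∀ x, ∃ A ∈ F, x ∉ A) : ∃ A ∈ F, i ∈ A ∧ j ∉ A := by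
  obtain ⟨A, hA, hj⟩ := hF j
  exact ⟨A, hA, (hpair A hA).resolve_right hj, hj⟩

theorem CrossIntersecting.card_add_card_le_of_pair {V : Finset ℕ} {F G : Finset (Finset ℕ)}
    {i j r : ℕ} (hV : 2 * (r + 2) < #V) (hF : F ⊆ powersetCard (r + 2) V)
    (hG : G ⊆ powersetCard (r + 2) V) (hFG : CrossIntersecting F G) (hij : i ≠ j)
    (hpair : ∀ A ∈ F, i ∈ A ∨ j ∈ A) (hF0 : ∀ x, ∃ A ∈ F, x ∉ A) (hG0 : ∀ x, ∃ A ∈ G, x ∉ A) :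
    #F + #G + 2 * (#V - (r + 2)).choose (r + 2) ≤
      (#V).choose (r + 2) + (#V - 2 * (r + 2)).choose (r + 2) + 2 := by
  obtain ⟨A₁, hA₁, hiA₁, hjA₁⟩ := exists_erase_mem_of_pair hpair hF0
  obtain ⟨A₂, hA₂, hjA₂, hiA₂⟩ := exists_erase_mem_of_pair (fun A hA => (hpair A hA).symm) hF0
  have hiV : i ∈ V := (mem_powersetCard.1 (hF hA₁)).1 hiA₁
  have hjV : j ∈ V := (mem_powersetCard.1 (hF hA₂)).1 hjA₂
  have hW : #((V.erase i).erase j) = #V - 2 := by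
    rw [card_erase_of_mem (mem_erase.2 ⟨hij.symm, hjV⟩), card_erase_of_mem hiV]
    omega
  have hFm := memberSubfamily_subset_powersetCard hF i
  have hFn := nonMemberSubfamily_subset_powersetCard hF i
  have hGm := memberSubfamily_subset_powersetCard hG i
  have hGn := nonMemberSubfamily_subset_powersetCard hG i
  have hF₀ : (F.nonMemberSubfamily i).nonMemberSubfamily j = ∅ :=
    eq_empty_of_forall_notMem fun A hA => by
      simp only [mem_nonMemberSubfamily] at hA
      exact (hpair A hA.1.1).elim hA.1.2 hA.2
  have hmain := card_links_le (by omega)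
    (memberSubfamily_subset_powersetCard hFm j) (nonMemberSubfamily_subset_powersetCard hFm j)
    (memberSubfamily_subset_powersetCard hFn j) (nonMemberSubfamily_subset_powersetCard hGm j)
    (memberSubfamily_subset_powersetCard hGn j) (nonMemberSubfamily_subset_powersetCard hGn j)
    ((hFG.member_nonMember i).nonMember_member j) ((hFG.nonMember_member i).member_nonMember j)
    ((hFG.member_nonMember i).nonMember_nonMember j)
    ((hFG.nonMember_nonMember i).member_nonMember j)
    ((hFG.member_nonMember i).member_nonMember j)
    ⟨A₁.erase i, by
      simp only [mem_nonMemberSubfamily, mem_memberSubfamily, insert_erase hiA₁]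
      exact ⟨⟨hA₁, notMem_erase _ _⟩, fun h => hjA₁ (mem_of_mem_erase h)⟩⟩
    ⟨A₂.erase j, by
      simp only [mem_nonMemberSubfamily, mem_memberSubfamily, insert_erase hjA₂]
      exact ⟨⟨hA₂, hiA₂⟩, notMem_erase _ _⟩⟩
    (fun h => by
      obtain ⟨B, hB, hjB⟩ := hG0 j
      have hiB : i ∉ B := fun hiB => by
        refine notMem_empty (B.erase i) (h ▸ ?_)
        simp only [mem_nonMemberSubfamily, mem_memberSubfamily, insert_erase hiB]
        exact ⟨⟨hB, notMem_erase _ _⟩, fun h => hjB (mem_of_mem_erase h)⟩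
      exact ⟨B, by simp only [mem_nonMemberSubfamily]; exact ⟨⟨hB, hiB⟩, hjB⟩⟩)
    (fun h => by
      obtain ⟨B, hB, hiB⟩ := hG0 i
      have hjB : j ∉ B := fun hjB => by
        refine notMem_empty (B.erase j) (h ▸ ?_)
        simp only [mem_nonMemberSubfamily, mem_memberSubfamily, insert_erase hjB]
        exact ⟨⟨hB, hiB⟩, notMem_erase _ _⟩
      exact ⟨B, by simp only [mem_nonMemberSubfamily]; exact ⟨⟨hB, hiB⟩, hjB⟩⟩)
    (fun x hx => by
      obtain ⟨A, hA, hxA⟩ := hF0 x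
      refine ⟨(A.erase i).erase j, fun h => hxA (mem_of_mem_erase (mem_of_mem_erase h)), ?_, ?_⟩
      · have hAc := (mem_powersetCard.1 (hF hA)).2
        rcases hpair A hA with h | h
        · have h1 := card_le_card (erase_subset j (A.erase i))
          rw [card_erase_of_mem h] at h1
          omega
        · have h1 := card_le_card (erase_subset i (A.erase j))
          rw [card_erase_of_mem h, erase_right_comm] at h1
          omega
      · intro S hS
        simp only [mem_nonMemberSubfamily] at hS
        obtain ⟨y, hy⟩ := hFG A hA S hS.1.1
        rw [mem_inter] at hy
        refine ⟨y, mem_inter.2 ⟨hy.2, mem_erase.2 ⟨?_, mem_erase.2 ⟨?_, hy.1⟩⟩⟩⟩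
        · rintro rfl; exact hS.2 hy.2
        · rintro rfl; exact hS.1.2 hy.2)
  have hG₁₂ := card_le_card (memberSubfamily_subset_powersetCard hGm j)
  rw [card_powersetCard] at hG₁₂
  have c1 := card_memberSubfamily_add_card_nonMemberSubfamily i F
  have c2 := card_memberSubfamily_add_card_nonMemberSubfamily i G
  have c3 := card_memberSubfamily_add_card_nonMemberSubfamily j (F.memberSubfamily i)
  have c4 := card_memberSubfamily_add_card_nonMemberSubfamily j (F.nonMemberSubfamily i)
  have c5 := card_memberSubfamily_add_card_nonMemberSubfamily j (G.memberSubfamily i)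
  have c6 := card_memberSubfamily_add_card_nonMemberSubfamily j (G.nonMemberSubfamily i)
  rw [hF₀, card_empty] at c4
  obtain ⟨N, hN⟩ : ∃ N, #V = N + 2 := ⟨#V - 2, by omega⟩
  rw [hW, hN, Nat.add_sub_cancel] at hmain hG₁₂
  rw [hN, show N + 2 - (r + 2) = N - (r + 1) + 1 by omega,
    show N + 2 - 2 * (r + 2) = N - 2 * (r + 1) by omega, Nat.choose_succ_succ' (N - (r + 1)),
    Nat.choose_succ_succ' (N + 1), Nat.choose_succ_succ' N, Nat.choose_succ_succ' N]
  simp only [show r + 1 + 1 = r + 2 from rfl]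
  omega

theorem Shifted.subset_thickSets {F G : Finset (Finset ℕ)} {n k : ℕ} (hS : Shifted G)
    (hF : F ⊆ powersetCard k (Icc 1 n)) (hG : G ⊆ powersetCard k (Icc 1 n))
    (hFG : CrossIntersecting F G) (hG0 : ∃ B ∈ G, 1 ∉ B) : F ⊆ thickSets (k + 1) 2 n k := by
  intro A hA
  refine mem_filter.2 ⟨hF hA, ?_⟩
  obtain ⟨B, hB, h1B⟩ := hG0
  have hmem := hS.Icc_mem (t := 1) hG hB fun x hx => by
    have := (mem_Icc.1 ((mem_powersetCard.1 (hG hB)).1 hx)).1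
    have : x ≠ 1 := by rintro rfl; exact h1B hx
    omega
  obtain ⟨x, hx⟩ := hFG A hA _ hmem
  simp only [mem_inter, mem_Icc] at hx
  have hmem' := hS _ hmem 1 x le_rfl (by omega) (by rw [mem_Icc]; omega) (by simp)
  obtain ⟨y, hy⟩ := hFG A hA _ hmem'
  simp only [mem_inter, mem_insert, mem_erase, mem_Icc] at hy
  refine one_lt_card.2 ⟨x, ?_, y, ?_, ?_⟩
  · simp only [mem_inter, mem_Icc]
    exact ⟨hx.1, by omega, by omega⟩
  · simp only [mem_inter, mem_Icc]
    exact ⟨hy.1, by omega, by omega⟩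
  · omega

theorem card_thickSets_two_le {m k : ℕ} (hk : 2 ≤ k) (hm : 2 * k ≤ m) :
    #(thickSets (k + 1) 2 m (k - 1)) + 2 * (m - k).choose (k - 1) ≤
      m.choose (k - 1) + (m - 2 * k).choose (k - 1) := by
  have hthick : ∀ S ∈ thickSets (k + 1) 2 m (k - 1), ∀ x,
      (S ∩ (Icc 1 (k + 1)).erase x).Nonempty := fun S hS x => by
    obtain ⟨y, hy, hyx⟩ := exists_mem_ne (mem_thickSets.1 hS).2 x
    rw [mem_inter] at hy
    exact ⟨y, mem_inter.2 ⟨hy.1, mem_erase.2 ⟨hyx, hy.2⟩⟩⟩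
  obtain ⟨r, rfl⟩ : ∃ r, k = r + 2 := ⟨k - 2, by omega⟩
  have h := card_transversal_le (Icc 1 (r + 2)) (b := r) (q := r + 2) (V := Icc 1 m)
    (Icc_subset_Icc_right (by omega)) (by simp only [Nat.card_Icc]; omega)
    (thickSets_subset (r + 2 + 1) 2 m (r + 1))
    (fun S hS => by
      have := hthick S hS (r + 2 + 1)
      rwa [Icc_one_succ_erase] at this)
    (fun x hx => ⟨(Icc 1 (r + 2 + 1)).erase x, notMem_erase _ _, by
      rw [card_erase_of_mem (Icc_subset_Icc_right (by omega) hx), Nat.card_Icc]; omega,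
      fun S hS => hthick S hS x⟩)
  simp only [Nat.card_Icc, Nat.add_sub_cancel] at h
  rw [show m - (r + 2) - (r + 2) = m - 2 * (r + 2) by omega] at h
  simp only [show r + 2 - 1 = r + 1 by omega]
  omega

/-- Maximum of |F| + |G| for non-trivial cross-intersecting k-uniform families. -/
theorem stmt2 (n k : ℕ) (hk : 2 ≤ k) (hn : 2 * k < n)
    (F G : Finset (Finset ℕ))
    (hF : F ⊆ (Finset.Icc 1 n).powersetCard k)
    (hG : G ⊆ (Finset.Icc 1 n).powersetCard k)
    (hcross : ∀ A ∈ F, ∀ B ∈ G, (A ∩ B).Nonempty)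
    (hntF : ∀ x : ℕ, ∃ A ∈ F, x ∉ A)
    (hntG : ∀ x : ℕ, ∃ B ∈ G, x ∉ B) :
    (F.card + G.card : ℤ) ≤
      (n.choose k : ℤ) - 2 * (n - k).choose k + (n - 2 * k).choose k + 2 := by
  by_contra hlt
  rw [not_le, ← Nat.cast_add] at hlt
  obtain ⟨r, rfl⟩ : ∃ r, k = r + 2 := ⟨k - 2, by omega⟩
  have hpair : ∀ {F' G' : Finset (Finset ℕ)} {i j : ℕ}, i ≠ j →
      F' ⊆ powersetCard (r + 2) (Icc 1 n) → G' ⊆ powersetCard (r + 2) (Icc 1 n) →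
      CrossIntersecting F' G' → (∀ x, ∃ A ∈ F', x ∉ A) → (∀ x, ∃ A ∈ G', x ∉ A) →
      #F' + #G' = #F + #G → ∃ A ∈ F', i ∉ A ∧ j ∉ A := by
    intro F' G' i j hij hF' hG' hFG' hF0 hG0 hc
    by_contra hno
    have := hFG'.card_add_card_le_of_pair (by rw [Nat.card_Icc]; omega) hF' hG' hij
      (fun A hA => by by_contra h; exact hno ⟨A, hA, not_or.1 h⟩) hF0 hG0
    rw [Nat.card_Icc, Nat.add_sub_cancel] at this
    omega
  obtain ⟨F', G', ⟨hF', hG', hFG', hF0, hG0, hc⟩, hSF, hSG⟩ := exists_shifted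
    (Q := fun F' G' => F' ⊆ powersetCard (r + 2) (Icc 1 n) ∧
      G' ⊆ powersetCard (r + 2) (Icc 1 n) ∧ CrossIntersecting F' G' ∧
      (∀ x, ∃ A ∈ F', x ∉ A) ∧ (∀ x, ∃ A ∈ G', x ∉ A) ∧ #F' + #G' = #F + #G)
    (fun F' G' i j ⟨h1, h2, h3, h4, h5, h6⟩ hi hij =>
      ⟨shift_subset_powersetCard hi hij h1, shift_subset_powersetCard hi hij h2, h3.shift i j,
        forall_exists_notMem_shift h4 (hpair hij.ne h1 h2 h3 h4 h5 h6),
        forall_exists_notMem_shift h5 (hpair hij.ne h2 h1 h3.symm h5 h4 (by omega)),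
        by rw [card_shift, card_shift, h6]⟩)
    ⟨hF, hG, hcross, hntF, hntG, rfl⟩
  have := CrossIntersecting.card_add_card_le_of_shifted (s := r + 3) (d := 2) (r := r + 1)
    (by omega) (by omega) (by omega)
    (fun m => m.choose (r + 2) - 2 * (m - (r + 2)).choose (r + 2) +
      (m - 2 * (r + 2)).choose (r + 2) + 2) ?_ ?_ n hn.le
    (hSG.subset_thickSets hF' hG' hFG' (hG0 1))
    (hSF.subset_thickSets hG' hF' hFG'.symm (hF0 1)) hSF hSG hFG'
  · rw [← Nat.cast_add, hc] at this
    exact absurd hlt (not_lt.2 this)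
  · rw [show 2 * (r + 1 + 1) - (r + 2) = r + 2 by omega, Nat.choose_self]
    simp
  · intro m hm
    have h1 := card_thickSets_two_le (m := m) (k := r + 2) hk hm
    simp only [show r + 2 - 1 = r + 1 by omega, show r + 2 + 1 = r + 3 by omega] at h1
    rw [show m + 1 - (r + 2) = m - (r + 2) + 1 by omega,
      show m + 1 - 2 * (r + 2) = m - 2 * (r + 2) + 1 by omega, Nat.choose_succ_succ' m,
      Nat.choose_succ_succ' (m - (r + 2)), Nat.choose_succ_succ' (m - 2 * (r + 2))]
    push_cast
    simp only [show r + 1 + 1 = r + 2 from rfl]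
    omega
end

section
/- Let k ≥ ℓ ≥ 2 and n > k + ℓ. Suppose F ⊆ C([n],k) and G ⊆ C([n],ℓ) are non-trivial and cross-intersecting. Then |F| + |G| ≤ C(n,k) − 2·C(n−ℓ,k) + C(n−2ℓ,k) + 2. -/
namespace CrossIntersecting

open Finset

theorem choose_le_choose_of_le_half {M a b : ℕ} (hab : a ≤ b) (hb : 2 * b ≤ M) :
    M.choose a ≤ M.choose b := by
  induction b, hab using Nat.le_induction with
  | base => rfl
  | succ b hab ih => exact (ih (by omega)).trans (Nat.choose_le_succ_of_lt_half_left (by omega))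

theorem choose_le_choose_of_add_le {M a b : ℕ} (hab : a ≤ b) (hM : a + b ≤ M) :
    M.choose a ≤ M.choose b := by
  rcases Nat.le_total (2 * b) M with h | h
  · exact choose_le_choose_of_le_half hab h
  · rw [← Nat.choose_symm (by omega : b ≤ M)]
    exact choose_le_choose_of_le_half (by omega) (by omega)

theorem choose_add_choose_sub_le (r : ℕ) : ∀ {M c : ℕ}, r < c → c + r ≤ M →
    M.choose r + (M - r).choose c ≤ M.choose c + 1 := by
  induction r with
  | zero => intro M c _ _; simp; omega
  | succ r ih =>
    intro M c hrc hM
    obtain ⟨M, rfl⟩ : ∃ M', M = M' + 1 := ⟨M - 1, by omega⟩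
    obtain ⟨c, rfl⟩ : ∃ c', c = c' + 1 := ⟨c - 1, by omega⟩
    have h1 := ih (M := M) (c := c + 1) (by omega) (by omega)
    have h2 := choose_le_choose_of_add_le (M := M) (a := r + 1) (b := c) (by omega) (by omega)
    rw [Nat.choose_succ_succ' M r, Nat.choose_succ_succ' M c, Nat.add_sub_add_right]
    omega

theorem choose_add_choose_sub_le_of_lt {M r c t : ℕ} (hrc : r < c) (hM : c + r ≤ M)
    (ht : r < t) : M.choose r + (M - t).choose c ≤ M.choose c := by
  have h1 := choose_add_choose_sub_le r hrc hM
  obtain ⟨c, rfl⟩ : ∃ c', c = c' + 1 := ⟨c - 1, by omega⟩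
  obtain ⟨s, hs⟩ : ∃ s, M - r = s + 1 := ⟨M - r - 1, by omega⟩
  have h2 : (M - t).choose (c + 1) ≤ s.choose (c + 1) := Nat.choose_le_choose _ (by omega)
  have h3 : 0 < s.choose c := Nat.choose_pos (by omega)
  rw [hs, Nat.choose_succ_succ' s c] at h1
  omega

/-- Discrete convexity, in the form: increments of `choose · k` increase. -/
theorem choose_add_choose_le_of_le {a b k : ℕ} (hab : a ≤ b) (d : ℕ) :
    (a + d).choose k + b.choose k ≤ a.choose k + (b + d).choose k := by
  induction d with
  | zero => simp
  | succ d ih =>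
    cases k with
    | zero => simp
    | succ k =>
      have := Nat.choose_le_choose k (show a + d ≤ b + d by omega)
      rw [← add_assoc, ← add_assoc, Nat.choose_succ_succ', Nat.choose_succ_succ']
      omega

theorem choose_lt_choose {a b k : ℕ} (hab : a < b) (hk : 1 ≤ k) (hb : k ≤ b) :
    a.choose k < b.choose k := by
  obtain ⟨b, rfl⟩ : ∃ b', b = b' + 1 := ⟨b - 1, by omega⟩
  obtain ⟨k, rfl⟩ : ∃ k', k = k' + 1 := ⟨k - 1, by omega⟩
  have h1 := Nat.choose_le_choose (k + 1) (show a ≤ b by omega)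
  have h2 : 0 < b.choose k := Nat.choose_pos (by omega)
  rw [Nat.choose_succ_succ']
  omega

theorem choose_bound_nontrivial {n k l p : ℕ} (hp : 1 ≤ p) (hpl : p < l) (hlk : l ≤ k)
    (hn : k + l < n) :
    (n - 2 * l + p).choose k + (n - l - p).choose k + 1 ≤
      (n - l).choose k + (n - 2 * l).choose k := by
  obtain ⟨a, ha⟩ : ∃ a, n = a + 2 * l := ⟨n - 2 * l, by omega⟩
  obtain ⟨p, rfl⟩ : ∃ p', p = p' + 1 := ⟨p - 1, by omega⟩
  obtain ⟨l, rfl⟩ : ∃ l', l = l' + 1 := ⟨l - 1, by omega⟩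
  obtain ⟨k, rfl⟩ : ∃ k', k = k' + 1 := ⟨k - 1, by omega⟩
  rw [show n - 2 * (l + 1) = a by omega, show n - (l + 1) = a + l + 1 by omega,
    show a + l + 1 - (p + 1) = a + (l - p) by omega, ← add_assoc,
    Nat.choose_succ_succ' (a + p), Nat.choose_succ_succ' (a + l)]
  have h1 := choose_add_choose_le_of_le (k := k + 1) (show a ≤ a + (l - p) by omega) p
  rw [show a + (l - p) + p = a + l by omega] at h1
  have h2 := choose_lt_choose (k := k) (show a + p < a + l by omega) (by omega) (by omega)
  omega

theorem choose_bound_empty {n k l p : ℕ} (hp : 2 ≤ p) (hpl : p < l) (hlk : l ≤ k)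
    (hn : k + l < n) :
    (n - p).choose (l - p) + (n - l - p).choose k + (n - l).choose k ≤
      (n - p).choose k + (n - 2 * l).choose k + 1 := by
  have key : ∀ q m, q + 2 ≤ l → k + 1 ≤ m → (m + q).choose q + (m - l + q).choose k + m.choose k ≤
      (m + q).choose k + (m - l).choose k + 1 := by
    intro q m hq hm
    induction q with
    | zero => simp; omega
    | succ q ih =>
      have h1 := ih (by omega)
      obtain ⟨k, rfl⟩ : ∃ k', k = k' + 1 := ⟨k - 1, by omega⟩
      have h2 := choose_add_choose_sub_le_of_lt (M := m + q) (r := q + 1) (c := k) (t := l)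
        (by omega) (by omega) (by omega)
      rw [show m + q - l = m - l + q by omega] at h2
      rw [← add_assoc, ← add_assoc, Nat.choose_succ_succ' (m + q) q,
        Nat.choose_succ_succ' (m + q) k, Nat.choose_succ_succ' (m - l + q) k]
      omega
  have h := key (l - p) (n - l) (by omega) (by omega)
  rwa [show n - l + (l - p) = n - p by omega, show n - l - l + (l - p) = n - l - p by omega,
    show n - l - l = n - 2 * l by omega] at h

theorem choose_bound_star {n k l p : ℕ} (hp : 1 ≤ p) (hpl : p < l) (hlk : l ≤ k)
    (hn : k + l < n) :
    (n - l - 1).choose k + (n - l - p).choose k + (n - 1 - p).choose (l - p - 1) ≤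
      (n - p - 1).choose k + (n - 2 * l).choose k := by
  have key : ∀ q m, q + 2 ≤ l → k ≤ m →
      m.choose k + (m + 1 - l + (q + 1)).choose k + (m + (q + 1)).choose q ≤
      (m + (q + 1)).choose k + (m + 1 - l).choose k := by
    intro q m hq hm
    obtain ⟨k, rfl⟩ : ∃ k', k = k' + 1 := ⟨k - 1, by omega⟩
    induction q with
    | zero =>
      have h := choose_lt_choose (k := k) (show m + 1 - l < m by omega) (by omega) (by omega)
      simp only [zero_add, Nat.choose_zero_right]
      rw [Nat.choose_succ_succ' (m + 1 - l) k, Nat.choose_succ_succ' m k]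
      omega
    | succ q ih =>
      have h1 := ih (by omega)
      have h2 := choose_add_choose_sub_le_of_lt (M := m + (q + 1)) (r := q + 1) (c := k)
        (t := l - 1) (by omega) (by omega) (by omega)
      rw [show m + (q + 1) - (l - 1) = m + 1 - l + (q + 1) by omega] at h2
      rw [← add_assoc _ (q + 1), ← add_assoc _ (q + 1), Nat.choose_succ_succ' (m + (q + 1)) q,
        Nat.choose_succ_succ' (m + (q + 1)) k, Nat.choose_succ_succ' (m + 1 - l + (q + 1)) k]
      omega
  have h := key (l - p - 1) (n - l - 1) (by omega) (by omega)
  rwa [show n - l - 1 + (l - p - 1 + 1) = n - p - 1 by omega,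
    show n - l - 1 + 1 - l + (l - p - 1 + 1) = n - l - p by omega,
    show n - l - 1 + 1 - l = n - 2 * l by omega, show n - p - 1 = n - 1 - p by omega] at *

theorem choose_add_sum_range_choose (y r j : ℕ) :
    y.choose (r + 1) + ∑ i ∈ range j, (y + i).choose r = (y + j).choose (r + 1) := by
  induction j with
  | zero => simp
  | succ j ih => rw [sum_range_succ, ← add_assoc, ih, ← add_assoc, Nat.choose_succ_succ']; omega

theorem sq_mul_choose_le_sum (x r k : ℕ) :
    k ^ 2 * (x + (k - 1)).choose r ≤
      ∑ i ∈ range k, ∑ j ∈ range k, (x + i + j).choose r := by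
  have hrefl : ∑ i ∈ range k, ∑ j ∈ range k, (x + i + j).choose r =
      ∑ i ∈ range k, ∑ j ∈ range k, (x + (k - 1 - i) + (k - 1 - j)).choose r := by
    rw [← sum_range_reflect]
    refine sum_congr rfl fun i _ ↦ ?_
    rw [← sum_range_reflect]
  have hmid : ∑ i ∈ range k, ∑ j ∈ range k, 2 * (x + (k - 1)).choose r ≤
      ∑ i ∈ range k, ∑ j ∈ range k,
        ((x + i + j).choose r + (x + (k - 1 - i) + (k - 1 - j)).choose r) := by
    refine sum_le_sum fun i hi ↦ sum_le_sum fun j hj ↦ ?_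
    have hi := mem_range.1 hi
    have hj := mem_range.1 hj
    rcases le_total (i + j) (k - 1) with h | h
    · have := choose_add_choose_le_of_le (k := r) (show x + i + j ≤ x + (k - 1) by omega)
        (k - 1 - (i + j))
      rw [show x + i + j + (k - 1 - (i + j)) = x + (k - 1) by omega,
        show x + (k - 1) + (k - 1 - (i + j)) = x + (k - 1 - i) + (k - 1 - j) by omega] at this
      omega
    · have := choose_add_choose_le_of_le (k := r)
        (show x + (k - 1 - i) + (k - 1 - j) ≤ x + (k - 1) by omega) (i + j - (k - 1))
      rw [show x + (k - 1 - i) + (k - 1 - j) + (i + j - (k - 1)) = x + (k - 1) by omega,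
        show x + (k - 1) + (i + j - (k - 1)) = x + i + j by omega] at this
      omega
  simp only [sum_add_distrib] at hmid
  rw [← hrefl] at hmid
  simp only [sum_const, card_range, smul_eq_mul] at hmid
  nlinarith

theorem sq_mul_choose_add_le (x k : ℕ) (hk : 2 ≤ k) :
    k ^ 2 * (x + (k - 1)).choose (k - 2) + 2 * (x + k).choose k ≤
      (x + k + k).choose k + x.choose k := by
  obtain ⟨r, rfl⟩ : ∃ r, k = r + 2 := ⟨k - 2, by omega⟩
  have h1 := sq_mul_choose_le_sum x r (r + 2)
  have h2 := choose_add_sum_range_choose x (r + 1) (r + 2)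
  have h3 := choose_add_sum_range_choose (x + (r + 2)) (r + 1) (r + 2)
  have h4 : ∑ i ∈ range (r + 2), (x + i).choose (r + 1) +
      ∑ i ∈ range (r + 2), ∑ j ∈ range (r + 2), (x + i + j).choose r =
      ∑ i ∈ range (r + 2), (x + (r + 2) + i).choose (r + 1) := by
    rw [← sum_add_distrib]
    refine sum_congr rfl fun i _ ↦ ?_
    rw [choose_add_sum_range_choose, add_right_comm]
  rw [show r + 1 + 1 = r + 2 from rfl] at h2 h3
  simp only [Nat.add_sub_cancel]
  omega

theorem choose_le_choose_sub_add_mul (y r j : ℕ) :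
    (y + j).choose (r + 1) ≤ y.choose (r + 1) + j * (y + j - 1).choose r := by
  rw [← choose_add_sum_range_choose]
  gcongr
  calc ∑ i ∈ range j, (y + i).choose r ≤ ∑ _i ∈ range j, (y + j - 1).choose r :=
        sum_le_sum fun i hi ↦ Nat.choose_le_choose _ (by have := mem_range.1 hi; omega)
    _ = j * (y + j - 1).choose r := by simp

theorem two_mul_choose_le_mul_choose {n k : ℕ} (hk : 2 ≤ k) (hn : k * (k - 1) + 2 ≤ n) :
    2 * (n - 2).choose (k - 2) ≤ k * (n - k - 1).choose (k - 2) := by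
  obtain ⟨r, rfl⟩ : ∃ r, k = r + 2 := ⟨k - 2, by omega⟩
  rcases r with _ | r
  · simp
  simp only [Nat.add_sub_cancel] at *
  obtain ⟨M, rfl⟩ : ∃ M, n = M + 3 := ⟨n - 3, by
    have : 0 < (r + 1 + 2) * (r + 1 + 2 - 1) := Nat.mul_pos (by omega) (by omega)
    omega⟩
  have hM : r + 3 ≤ M + 1 := by
    have : (r + 1 + 2) * (r + 1 + 2 - 1) = (r + 3) * (r + 2) := rfl
    nlinarith
  have h1 := choose_le_choose_sub_add_mul (M + 3 - (r + 1 + 2) - 1) r (r + 2)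
  rw [show M + 3 - (r + 1 + 2) - 1 + (r + 2) = M + 1 by omega, Nat.add_sub_cancel] at h1
  have h2 := Nat.add_one_mul_choose_eq M r
  have h3 : (r + 3) * (r + 2) ≤ M + 1 := by
    have : (r + 1 + 2) * (r + 1 + 2 - 1) = (r + 3) * (r + 2) := rfl
    omega
  have h4 : (r + 3) * (r + 2) * M.choose r ≤ (M + 1) * M.choose r := Nat.mul_le_mul_right _ h3
  rw [show M + 3 - 2 = M + 1 by omega]
  nlinarith

theorem two_mul_sq_add_mul_pow_le (s k j : ℤ) (hs : 0 ≤ s) (hk : 0 ≤ k) (i : ℕ) (hj : j = i) :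
    s ^ i * (2 * s ^ 2 + 2 * j * k * s + j * (j - 1) * k ^ 2) ≤ (s + k) ^ i * (2 * s ^ 2) := by
  induction i generalizing j with
  | zero => simp at hj; simp [hj]
  | succ i ih =>
    have h := mul_le_mul_of_nonneg_right (ih i rfl) (add_nonneg hs hk)
    have hi : (0 : ℤ) ≤ i * (i - 1) := by
      rcases i with _ | i
      · simp
      · push_cast; rw [add_sub_cancel_right]; positivity
    have h2 : 0 ≤ s ^ i * (i * (i - 1) * k ^ 3) :=
      mul_nonneg (pow_nonneg hs _) (mul_nonneg hi (pow_nonneg hk 3))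
    subst hj
    push_cast
    rw [pow_succ, pow_succ (s + k)]
    nlinarith

theorem pow_mul_descFactorial_le (s k j : ℕ) (hj : j ≤ s) :
    (s + k) ^ j * s.descFactorial j ≤ s ^ j * (s + k).descFactorial j := by
  induction j with
  | zero => simp
  | succ j ih =>
    have h1 : (s + k) * (s - j) ≤ s * (s + k - j) := by
      obtain ⟨d, rfl⟩ : ∃ d, s = j + d := ⟨s - j, by omega⟩
      rw [show j + d - j = d by omega, show j + d + k - j = d + k by omega]
      nlinarith
    have h2 := Nat.mul_le_mul h1 (ih (by omega))
    rw [Nat.descFactorial_succ, Nat.descFactorial_succ, pow_succ, pow_succ]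
    calc _ = (s + k) * (s - j) * ((s + k) ^ j * s.descFactorial j) := by ring
      _ ≤ _ := h2
      _ = _ := by ring

theorem two_mul_mul_choose_le {s k : ℕ} (hk : 2 ≤ k) (hks : k ≤ s)
    (hs : s + 2 * k ≤ k ^ 2 + 1) :
    2 * (s + k - 1) * s.choose k ≤ (s - k + 1) * (s + k).choose k := by
  obtain ⟨j, rfl⟩ : ∃ j, k = j + 1 := ⟨k - 1, by omega⟩
  have hpoly : 2 * (s + j) * s ^ j ≤ (s + 1) * (s + (j + 1)) ^ j := by
    have h1 := two_mul_sq_add_mul_pow_le s (j + 1) j (by positivity) (by positivity) j rfl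
    have hs' : (s : ℤ) ≤ j ^ 2 := by
      have : s + 2 * (j + 1) ≤ (j + 1) ^ 2 + 1 := hs
      zify at this
      nlinarith
    have hj1 : (1 : ℤ) ≤ j := by exact_mod_cast (by omega : 1 ≤ j)
    have hs1 : (1 : ℤ) ≤ s := by exact_mod_cast (by omega : 1 ≤ s)
    have h2 : 2 * (s : ℤ) * (s - (j ^ 2 - j + 1)) ≤ (j + 1) ^ 2 * j * (j - 1) := by
      rcases le_total ((s : ℤ) - (j ^ 2 - j + 1)) 0 with h | h
      · have : (0 : ℤ) ≤ (j + 1) ^ 2 * j * (j - 1) :=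
          mul_nonneg (by positivity) (by linarith)
        nlinarith
      · have h3 : (s : ℤ) * (s - (j ^ 2 - j + 1)) ≤ j ^ 2 * (j - 1) :=
          mul_le_mul hs' (by linarith) h (by positivity)
        have h4 : (0 : ℤ) ≤ j * (j - 1) := mul_nonneg (by positivity) (by linarith)
        nlinarith
    have h3 : (2 * (s + j) : ℤ) * (2 * s ^ 2) ≤
        (s + 1) * (2 * s ^ 2 + 2 * j * (j + 1) * s + j * (j - 1) * (j + 1) ^ 2) := by
      have h5 := mul_le_mul_of_nonneg_left h2 (by positivity : (0 : ℤ) ≤ s)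
      have h6 : (0 : ℤ) ≤ j * (j - 1) * (j + 1) ^ 2 :=
        mul_nonneg (mul_nonneg (by positivity) (by linarith)) (by positivity)
      have h7 : (0 : ℤ) ≤ 2 * j * (j + 1) * s := by positivity
      nlinarith
    have h4 : ((2 * (s + j) * s ^ j : ℕ) : ℤ) * (2 * s ^ 2) ≤
        (((s + 1) * (s + (j + 1)) ^ j : ℕ) : ℤ) * (2 * s ^ 2) := by
      push_cast
      calc (2 : ℤ) * (s + j) * s ^ j * (2 * s ^ 2)
          = (s : ℤ) ^ j * ((2 * (s + j)) * (2 * s ^ 2)) := by ring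
        _ ≤ (s : ℤ) ^ j * ((s + 1) * (2 * s ^ 2 + 2 * j * (j + 1) * s + j * (j - 1) * (j + 1) ^ 2)) :=
            mul_le_mul_of_nonneg_left h3 (by positivity)
        _ = ((s : ℤ) + 1) *
            (s ^ j * (2 * s ^ 2 + 2 * j * (j + 1) * s + j * (j - 1) * (j + 1) ^ 2)) := by ring
        _ ≤ ((s : ℤ) + 1) * ((s + (j + 1)) ^ j * (2 * s ^ 2)) :=
            mul_le_mul_of_nonneg_left h1 (by positivity)
        _ = _ := by ring
    exact_mod_cast le_of_mul_le_mul_right h4 (by positivity)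
  have hdesc := pow_mul_descFactorial_le s (j + 1) j (by omega)
  have hd1 : s.descFactorial (j + 1) = (s - j) * s.descFactorial j := Nat.descFactorial_succ _ _
  have hd2 : (s + (j + 1)).descFactorial (j + 1) = (s + 1) * (s + (j + 1)).descFactorial j := by
    rw [Nat.descFactorial_succ]; congr 1; omega
  have hpos : 0 < s ^ j * (j + 1).factorial :=
    Nat.mul_pos (pow_pos (by omega) _) (Nat.factorial_pos _)
  refine Nat.le_of_mul_le_mul_left ?_ hpos
  rw [show s + (j + 1) - 1 = s + j by omega, show s - (j + 1) + 1 = s - j by omega]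
  calc s ^ j * (j + 1).factorial * (2 * (s + j) * s.choose (j + 1))
      = (2 * (s + j) * s ^ j) * ((j + 1).factorial * s.choose (j + 1)) := by ring
    _ = (2 * (s + j) * s ^ j) * ((s - j) * s.descFactorial j) := by
        rw [← Nat.descFactorial_eq_factorial_mul_choose, hd1]
    _ ≤ ((s + 1) * (s + (j + 1)) ^ j) * ((s - j) * s.descFactorial j) :=
        Nat.mul_le_mul_right _ hpoly
    _ = (s + 1) * (s - j) * ((s + (j + 1)) ^ j * s.descFactorial j) := by ring
    _ ≤ (s + 1) * (s - j) * (s ^ j * (s + (j + 1)).descFactorial j) :=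
        Nat.mul_le_mul_left _ hdesc
    _ = s ^ j * (s - j) * ((s + 1) * (s + (j + 1)).descFactorial j) := by ring
    _ = s ^ j * (s - j) * ((j + 1).factorial * (s + (j + 1)).choose (j + 1)) := by
        rw [← hd2, Nat.descFactorial_eq_factorial_mul_choose]
    _ = s ^ j * (j + 1).factorial * ((s - j) * (s + (j + 1)).choose (j + 1)) := by ring

theorem choose_low_degree {n k : ℕ} (hk : 2 ≤ k) (hn : 2 * k + 1 ≤ n) :
    2 * (k * (n - 2).choose (k - 2)) + 2 * (n - k).choose k ≤
      n.choose k + (n - 2 * k).choose k + 2 ∨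
    2 * (n * (n - 2).choose (k - 2)) + k * (2 * (n - k).choose k) ≤
      k * (n.choose k + (n - 2 * k).choose k + 2) := by
  rcases le_or_gt (k * (k - 1) + 2) n with h | h
  · left
    have h1 := two_mul_choose_le_mul_choose hk h
    have h2 := sq_mul_choose_add_le (n - 2 * k) k hk
    rw [show n - 2 * k + (k - 1) = n - k - 1 by omega, show n - 2 * k + k = n - k by omega,
      show n - k + k = n by omega] at h2
    nlinarith
  · right
    obtain ⟨s, rfl⟩ : ∃ s, n = s + k := ⟨n - k, by omega⟩
    obtain ⟨r, rfl⟩ : ∃ r, k = r + 2 := ⟨k - 2, by omega⟩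
    rw [show r + 2 - 1 = r + 1 by omega] at h
    have h1 := two_mul_mul_choose_le (s := s) (k := r + 2) (by omega) (by omega) (by nlinarith)
    obtain ⟨m, rfl⟩ : ∃ m, s = m + (r + 2) := ⟨s - (r + 2), by omega⟩
    have h2 := Nat.add_one_mul_choose_eq (m + r + 2 + r + 1) (r + 1)
    have h3 := Nat.add_one_mul_choose_eq (m + r + 2 + r) r
    simp only [Nat.add_sub_cancel]
    rw [show m + (r + 2) + (r + 2) - 2 = m + r + 2 + r by omega]
    rw [show m + (r + 2) + (r + 2) - 1 = m + r + 2 + r + 1 by omega, Nat.add_sub_cancel] at h1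
    rw [show m + (r + 2) + (r + 2) = m + r + 2 + r + 1 + 1 by omega] at *
    rw [show r + 1 + 1 = r + 2 by omega] at h2
    set a := (m + r + 2 + r).choose r
    set b := (m + r + 2 + r + 1).choose (r + 1)
    set c := (m + r + 2 + r + 1 + 1).choose (r + 2)
    set d := (m + (r + 2)).choose (r + 2)
    set N := m + r + 2 + r + 1 with hN
    -- `N * (N + 1) * a = (r + 1) * (r + 2) * c` and `2 * N * d ≤ (m + 1) * c`
    have hA : N * ((N + 1) * a) = (r + 1) * ((r + 2) * c) := by
      calc N * ((N + 1) * a) = (N + 1) * (N * a) := by ring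
        _ = (N + 1) * (b * (r + 1)) := by rw [h3]
        _ = (r + 1) * ((N + 1) * b) := by ring
        _ = (r + 1) * ((r + 2) * c) := by rw [h2]; ring
    have hB : N * (2 * ((N + 1) * a) + (r + 2) * (2 * d)) ≤ N * ((r + 2) * c) := by
      calc N * (2 * ((N + 1) * a) + (r + 2) * (2 * d))
          = 2 * (N * ((N + 1) * a)) + (r + 2) * (2 * N * d) := by ring
        _ ≤ 2 * ((r + 1) * ((r + 2) * c)) + (r + 2) * ((m + 1) * c) := by
            rw [hA]; gcongr
        _ = N * ((r + 2) * c) := by rw [hN]; ring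
    have hC := Nat.le_of_mul_le_mul_left hB (by omega)
    refine hC.trans (Nat.mul_le_mul_left _ (by omega))

open Finset.Colex in
theorem exists_isInitSeg_card {α : Type*} [LinearOrder α] [Fintype α] (r : ℕ) :
    ∀ m ≤ (Fintype.card α).choose r, ∃ 𝒞 : Finset (Finset α), IsInitSeg 𝒞 r ∧ #𝒞 = m := by
  intro m
  induction m with
  | zero => exact fun _ ↦ ⟨∅, isInitSeg_empty, rfl⟩
  | succ m ih =>
    intro hm
    obtain ⟨𝒞, h𝒞, rfl⟩ := ih (by omega)
    have hlt : #𝒞 < #((univ : Finset α).powersetCard r) := by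
      rw [card_powersetCard, card_univ]; omega
    obtain ⟨t, ht, htmin⟩ := exists_min_image ((univ : Finset α).powersetCard r \ 𝒞)
      (fun s ↦ toColex s) (by
        rw [sdiff_nonempty]
        exact fun h ↦ absurd (card_le_card h) (by omega))
    simp only [mem_sdiff, mem_powersetCard, subset_univ, true_and] at ht htmin
    refine ⟨insert t 𝒞, ⟨?_, ?_⟩, card_insert_of_notMem ht.2⟩
    · intro s hs
      rcases mem_insert.1 (mem_coe.1 hs) with rfl | hs
      · exact ht.1
      · exact h𝒞.1 hs
    · rintro s u hs ⟨hus, hu⟩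
      rcases mem_insert.1 hs with rfl | hs
      · by_contra hu'
        exact absurd (htmin u ⟨hu, fun h ↦ hu' (mem_insert_of_mem h)⟩) (not_le.2 hus)
      · exact mem_insert_of_mem (h𝒞.2 hs ⟨hus, hu⟩)

theorem exists_map_castSucc_eq {N : ℕ} {T : Finset (Fin (N + 1))} (hT : Fin.last N ∉ T) :
    ∃ A : Finset (Fin N), A.map Fin.castSuccEmb = T := by
  refine ⟨T.preimage Fin.castSucc (Fin.castSucc_injective N).injOn, ?_⟩
  ext x
  simp only [Finset.mem_map, Finset.mem_preimage, Fin.castSuccEmb_apply]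
  constructor
  · rintro ⟨y, hy, rfl⟩
    exact hy
  · intro hx
    obtain ⟨y, rfl⟩ := Fin.exists_castSucc_eq.2 (fun h : x = Fin.last N ↦ hT (h ▸ hx))
    exact ⟨y, hx, rfl⟩

theorem last_notMem_map_castSucc {N : ℕ} (A : Finset (Fin N)) :
    Fin.last N ∉ A.map Fin.castSuccEmb := by
  simp [Fin.castSucc_ne_last]

open Finset.Colex in
open scoped FinsetFamily in
/-- Compression via Kruskal–Katona: if `F` is larger than a full star, one may assume that it
contains a full star, and then remove the centre of that star. -/
theorem exists_crossIntersecting_of_choose_lt {N a b : ℕ} (hN : a + b + 1 ≤ N)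
    {F G : Finset (Finset (Fin (N + 1)))}
    (hF : (F : Set (Finset (Fin (N + 1)))).Sized (a + 1))
    (hG : (G : Set (Finset (Fin (N + 1)))).Sized (b + 1))
    (hFG : ∀ A ∈ F, ∀ B ∈ G, ¬ Disjoint A B) (hcard : N.choose a < #F) :
    ∃ F' G' : Finset (Finset (Fin N)), (F' : Set (Finset (Fin N))).Sized (a + 1) ∧
      (G' : Set (Finset (Fin N))).Sized b ∧ (∀ A ∈ F', ∀ B ∈ G', ¬ Disjoint A B) ∧
      #F' + N.choose a = #F ∧ #G ≤ #G' := by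
  have hFc : (Fᶜˢ : Set (Finset (Fin (N + 1)))).Sized (N - a) := by
    have := hF.compls
    simpa using this
  have hFcard : #F ≤ (Fintype.card (Fin (N + 1))).choose (N - a) := by
    rw [← card_compls]; exact hFc.card_le
  obtain ⟨𝒞, h𝒞, h𝒞card⟩ := exists_isInitSeg_card (α := Fin (N + 1)) (N - a) #F hFcard
  have hcardL : #(((univ : Finset (Fin (N + 1))).erase (Fin.last N)).powersetCard (N - a)) =
      N.choose a := by
    rw [card_powersetCard, card_erase_of_mem (mem_univ _), card_univ, Fintype.card_fin,
      Nat.add_sub_cancel, Nat.choose_symm (by omega)]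
  obtain ⟨S, hS, hlast⟩ : ∃ S ∈ 𝒞, Fin.last N ∈ S := by
    by_contra! h
    have : 𝒞 ⊆ ((univ : Finset (Fin (N + 1))).erase (Fin.last N)).powersetCard (N - a) := by
      intro S hS
      rw [mem_powersetCard]
      exact ⟨fun x hx ↦ mem_erase.2 ⟨fun e ↦ h S hS (e ▸ hx), mem_univ _⟩, h𝒞.1 hS⟩
    have := card_le_card this
    omega
  have hall : ∀ T : Finset (Fin (N + 1)), #T = N - a → Fin.last N ∉ T → T ∈ 𝒞 := by
    intro T hT hTl
    refine h𝒞.2 hS ⟨?_, hT⟩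
    rw [toColex_lt_toColex_iff_exists_forall_lt]
    exact ⟨Fin.last N, hlast, hTl, fun b hb _ ↦ Fin.lt_last_iff_ne_last.2 fun e ↦ hTl (e ▸ hb)⟩
  have hfilter : 𝒞.filter (Fin.last N ∉ ·) =
      ((univ : Finset (Fin (N + 1))).erase (Fin.last N)).powersetCard (N - a) := by
    ext T
    rw [mem_filter, mem_powersetCard]
    constructor
    · rintro ⟨hT, hTl⟩
      exact ⟨fun x hx ↦ mem_erase.2 ⟨fun e ↦ hTl (e ▸ hx), mem_univ _⟩, h𝒞.1 hT⟩
    · rintro ⟨hT, hTc⟩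
      have hTl : Fin.last N ∉ T := fun h ↦ (mem_erase.1 (hT h)).1 rfl
      exact ⟨hall T hTc hTl, hTl⟩
  set Gs : Finset (Finset (Fin (N + 1))) :=
    ((univ : Finset (Fin (N + 1))).powersetCard (b + 1)).filter (fun B ↦ ∀ S ∈ 𝒞, ¬ B ⊆ S)
    with hGs
  have hshadow : ∀ 𝒟 : Finset (Finset (Fin (N + 1))),
      (𝒟 : Set (Finset (Fin (N + 1)))).Sized (N - a) →
      ((univ : Finset (Fin (N + 1))).powersetCard (b + 1)).filter (fun B ↦ ∀ S ∈ 𝒟, ¬ B ⊆ S) =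
      (univ : Finset (Fin (N + 1))).powersetCard (b + 1) \ ∂^[N - a - (b + 1)] 𝒟 := by
    intro 𝒟 h𝒟
    ext B
    simp only [mem_filter, mem_sdiff, mem_powersetCard, subset_univ, true_and,
      mem_shadow_iterate_iff_exists_mem_card_add, not_exists, not_and]
    refine and_congr_right fun hB ↦ ⟨fun h S hS hBS _ ↦ h S hS hBS, fun h S hS hBS ↦ ?_⟩
    refine h S hS hBS ?_
    rw [h𝒟 hS, hB]; omega
  have hsub : ∀ 𝒟 : Finset (Finset (Fin (N + 1))),
      (𝒟 : Set (Finset (Fin (N + 1)))).Sized (N - a) →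
      ∂^[N - a - (b + 1)] 𝒟 ⊆ (univ : Finset (Fin (N + 1))).powersetCard (b + 1) := by
    intro 𝒟 h𝒟 B hB
    have := h𝒟.shadow_iterate (k := N - a - (b + 1)) hB
    rw [mem_powersetCard]
    exact ⟨subset_univ _, by omega⟩
  have hGle : #G ≤ #Gs := by
    have h1 : G ⊆ ((univ : Finset (Fin (N + 1))).powersetCard (b + 1)).filter
        (fun B ↦ ∀ S ∈ Fᶜˢ, ¬ B ⊆ S) := by
      intro B hB
      rw [mem_filter, mem_powersetCard]
      refine ⟨⟨subset_univ _, hG hB⟩, fun S hS hBS ↦ hFG _ (mem_compls.1 hS) B hB ?_⟩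
      exact (disjoint_left.2 fun x hx hxB ↦ (mem_compl.1 hx) (hBS hxB))
    have h2 := card_le_card h1
    have h3 := iterated_kk (k := N - a - (b + 1)) hFc (by rw [h𝒞card, card_compls]) h𝒞
    rw [hshadow _ hFc, card_sdiff_of_subset (hsub _ hFc)] at h2
    rw [hGs, hshadow _ h𝒞.1, card_sdiff_of_subset (hsub _ h𝒞.1)]
    omega
  have hGlast : ∀ B ∈ Gs, Fin.last N ∈ B := by
    intro B hB
    rw [hGs, mem_filter, mem_powersetCard] at hB
    by_contra hl
    obtain ⟨T, hBT, hT, hTc⟩ := exists_subsuperset_card_eq (n := N - a)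
      (show B ⊆ univ.erase (Fin.last N) from
        fun x hx ↦ mem_erase.2 ⟨fun e ↦ hl (e ▸ hx), mem_univ _⟩)
      (by omega) (by rw [card_erase_of_mem (mem_univ _), card_univ, Fintype.card_fin]; omega)
    exact hB.2 T (hall T hTc fun h ↦ (mem_erase.1 (hT h)).1 rfl) hBT
  refine ⟨univ.filter (fun A ↦ (A.map Fin.castSuccEmb)ᶜ ∈ 𝒞),
    univ.filter (fun B ↦ insert (Fin.last N) (B.map Fin.castSuccEmb) ∈ Gs), ?_, ?_, ?_, ?_, ?_⟩
  · intro A hA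
    have hA := h𝒞.1 (mem_filter.1 (mem_coe.1 hA)).2
    rw [card_compl, Fintype.card_fin, card_map] at hA
    have := card_le_univ A
    rw [Fintype.card_fin] at this
    omega
  · intro B hB
    have hB := (mem_filter.1 (mem_coe.1 hB)).2
    rw [hGs, mem_filter, mem_powersetCard,
      card_insert_of_notMem (last_notMem_map_castSucc B), card_map] at hB
    omega
  · intro A hA B hB hAB
    have hA := (mem_filter.1 hA).2
    have hB := (mem_filter.1 hB).2
    rw [hGs, mem_filter] at hB
    refine hB.2 _ hA fun x hx ↦ mem_compl.2 fun hxA ↦ ?_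
    rcases mem_insert.1 hx with rfl | hx
    · exact last_notMem_map_castSucc A hxA
    · exact disjoint_left.1 ((disjoint_map _).2 hAB) hxA hx
  · rw [← h𝒞card, ← card_filter_add_card_filter_not (s := 𝒞) (Fin.last N ∈ ·), hfilter, hcardL]
    congr 1
    refine card_bij (fun A _ ↦ (A.map Fin.castSuccEmb)ᶜ) ?_ ?_ ?_
    · intro A hA
      exact mem_filter.2 ⟨(mem_filter.1 hA).2, mem_compl.2 (last_notMem_map_castSucc A)⟩
    · intro A _ A' _ h
      exact map_injective _ (compl_injective h)
    · intro T hT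
      obtain ⟨hT, hTl⟩ := mem_filter.1 hT
      obtain ⟨A, hA⟩ := exists_map_castSucc_eq (T := Tᶜ) (by simpa using hTl)
      exact ⟨A, by simp [hA, hT], by simp [hA]⟩
  · refine hGle.trans (card_le_card_of_surjOn
      (fun B ↦ insert (Fin.last N) (B.map Fin.castSuccEmb)) ?_)
    intro B hB
    obtain ⟨B', hB'⟩ := exists_map_castSucc_eq (T := B.erase (Fin.last N)) (by simp)
    refine ⟨B', ?_, ?_⟩
    · simp [hB', insert_erase (hGlast B hB), mem_coe.1 hB]
    · simp [hB', insert_erase (hGlast B hB)]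

theorem card_add_card_le_of_choose_lt_fin {N a b : ℕ} (hba : b ≤ a + 1) (hN : a + b + 1 ≤ N)
    (ih : 1 ≤ b → ∀ F G : Finset (Finset (Fin N)), (F : Set (Finset (Fin N))).Sized (a + 1) →
      (G : Set (Finset (Fin N))).Sized b → (∀ A ∈ F, ∀ B ∈ G, ¬ Disjoint A B) →
      F.Nonempty → G.Nonempty → #F + #G + (N - b).choose (a + 1) ≤ N.choose (a + 1) + 1)
    {F G : Finset (Finset (Fin (N + 1)))}
    (hF : (F : Set (Finset (Fin (N + 1)))).Sized (a + 1))
    (hG : (G : Set (Finset (Fin (N + 1)))).Sized (b + 1))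
    (hFG : ∀ A ∈ F, ∀ B ∈ G, ¬ Disjoint A B) (hGne : G.Nonempty) (hcard : N.choose a < #F) :
    #F + #G + (N - b).choose (a + 1) ≤ (N + 1).choose (a + 1) + 1 := by
  obtain ⟨F', G', hF', hG', hFG', hFc, hGc⟩ :=
    exists_crossIntersecting_of_choose_lt hN hF hG hFG hcard
  have hF'ne : F'.Nonempty := card_pos.1 (by omega)
  have hG'ne : G'.Nonempty := card_pos.1 (by have := card_pos.2 hGne; omega)
  have hb : 1 ≤ b := by
    by_contra hb
    obtain rfl : b = 0 := by omega
    obtain ⟨A, hA⟩ := hF'ne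
    obtain ⟨B, hB⟩ := hG'ne
    exact hFG' A hA B hB (by rw [card_eq_zero.1 (hG' hB)]; exact disjoint_empty_right A)
  have := ih hb F' G' hF' hG' hFG' hF'ne hG'ne
  rw [Nat.choose_succ_succ']
  omega

theorem card_add_card_le_fin (n : ℕ) : ∀ k l : ℕ, 1 ≤ l → l ≤ k → k + l ≤ n →
    ∀ F G : Finset (Finset (Fin n)), (F : Set (Finset (Fin n))).Sized k →
      (G : Set (Finset (Fin n))).Sized l → (∀ A ∈ F, ∀ B ∈ G, ¬ Disjoint A B) →
      F.Nonempty → G.Nonempty → #F + #G + (n - l).choose k ≤ n.choose k + 1 := by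
  induction n with
  | zero => intros; omega
  | succ N ih =>
    intro k l hl hlk hn F G hF hG hFG hFne hGne
    obtain ⟨a, rfl⟩ : ∃ a, k = a + 1 := ⟨k - 1, by omega⟩
    obtain ⟨b, rfl⟩ : ∃ b, l = b + 1 := ⟨l - 1, by omega⟩
    have hGF : ∀ B ∈ G, ∀ A ∈ F, ¬ Disjoint B A := fun B hB A hA h ↦ hFG A hA B hB h.symm
    rw [Nat.add_sub_add_right]
    have hH := choose_add_choose_sub_le b (M := N) (c := a + 1) (by omega) (by omega)
    rcases lt_or_ge (N.choose a) #F with h1 | h1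
    · exact card_add_card_le_of_choose_lt_fin (by omega) (by omega)
        (fun hb ↦ ih (a + 1) b hb (by omega) (by omega)) hF hG hFG hGne h1
    rcases lt_or_ge (N.choose b) #G with h2 | h2
    · rcases hlk.eq_or_lt with h | h
      · obtain rfl : b = a := by omega
        have := card_add_card_le_of_choose_lt_fin (by omega) (by omega)
          (fun hb ↦ ih (b + 1) b hb (by omega) (by omega)) hG hF hGF hFne h2
        omega
      · obtain ⟨G', F', hG', hF', hGF', hGc, hFc⟩ :=
          exists_crossIntersecting_of_choose_lt (by omega) hG hF hGF h2
        have := ih a (b + 1) (by omega) (by omega) (by omega) F' G' hF' hG'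
          (fun A hA B hB h ↦ hGF' B hB A hA h.symm)
          (card_pos.1 (by have := card_pos.2 hFne; omega)) (card_pos.1 (by omega))
        have h3 : 0 < (N - (b + 1)).choose a := Nat.choose_pos (by omega)
        rw [Nat.choose_succ_succ']
        omega
    · rw [Nat.choose_succ_succ']
      omega

/-- Families of subsets of an `n`-element set `V` have copies on `Fin n`. -/
theorem exists_fin_copy {V : Finset ℕ} {n : ℕ} (hV : #V = n) :
    ∃ φ : Finset (Finset ℕ) → Finset (Finset (Fin n)), ∃ e : Fin n ↪ ℕ,
      (∀ F A, A ∈ φ F ↔ A.map e ∈ F) ∧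
      ∀ F k, F ⊆ V.powersetCard k → #(φ F) = #F ∧ (φ F : Set (Finset (Fin n))).Sized k := by
  classical
  refine ⟨fun F ↦ univ.filter (fun A ↦ A.map (V.orderEmbOfFin hV).toEmbedding ∈ F),
    (V.orderEmbOfFin hV).toEmbedding, by simp, fun F k hF ↦ ⟨?_, ?_⟩⟩
  · refine card_bij (fun A _ ↦ A.map (V.orderEmbOfFin hV).toEmbedding) (by simp) ?_ ?_
    · intro A _ A' _ h
      exact map_injective _ h
    · intro B hB
      have hBV := (mem_powersetCard.1 (hF hB)).1
      have hB' : ∃ A : Finset (Fin n), A.map (V.orderEmbOfFin hV).toEmbedding = B := by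
        rw [← map_orderEmbOfFin_univ V hV, subset_map_iff] at hBV
        obtain ⟨A, -, hA⟩ := hBV
        exact ⟨A, hA.symm⟩
      obtain ⟨A, rfl⟩ := hB'
      exact ⟨A, by simpa using hB, rfl⟩
  · intro A hA
    have := (mem_powersetCard.1 (hF (mem_filter.1 (mem_coe.1 hA)).2)).2
    rwa [card_map] at this

/-- The Hilton–Milner type bound for two nonempty cross-intersecting families. -/
theorem card_add_card_le_of_nonempty {V : Finset ℕ} {k l : ℕ} (hl : 1 ≤ l) (hlk : l ≤ k)
    (hV : k + l ≤ #V) {F G : Finset (Finset ℕ)} (hF : F ⊆ V.powersetCard k)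
    (hG : G ⊆ V.powersetCard l) (hFG : ∀ A ∈ F, ∀ B ∈ G, ¬ Disjoint A B)
    (hFne : F.Nonempty) (hGne : G.Nonempty) :
    #F + #G + (#V - l).choose k ≤ (#V).choose k + 1 := by
  obtain ⟨φ, e, hmem, hφ⟩ := exists_fin_copy (V := V) rfl
  rw [← (hφ F k hF).1, ← (hφ G l hG).1]
  refine card_add_card_le_fin _ k l hl hlk hV (φ F) (φ G) (hφ F k hF).2 (hφ G l hG).2 ?_ ?_ ?_
  · intro A hA B hB h
    exact hFG _ ((hmem F A).1 hA) _ ((hmem G B).1 hB) ((disjoint_map e).2 h)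
  · rw [← card_pos, (hφ F k hF).1]; exact card_pos.2 hFne
  · rw [← card_pos, (hφ G l hG).1]; exact card_pos.2 hGne

theorem card_add_card_le_of_choose_lt {V : Finset ℕ} {a b : ℕ} (hba : b ≤ a + 1)
    (hV : a + b + 2 ≤ #V) {F G : Finset (Finset ℕ)} (hF : F ⊆ V.powersetCard (a + 1))
    (hG : G ⊆ V.powersetCard (b + 1)) (hFG : ∀ A ∈ F, ∀ B ∈ G, ¬ Disjoint A B)
    (hGne : G.Nonempty) (hcard : (#V - 1).choose a < #F) :
    #F + #G + (#V - (b + 1)).choose (a + 1) ≤ (#V).choose (a + 1) + 1 := by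
  obtain ⟨N, hN⟩ : ∃ N, #V = N + 1 := ⟨#V - 1, by omega⟩
  obtain ⟨φ, e, hmem, hφ⟩ := exists_fin_copy hN
  rw [hN, Nat.add_sub_cancel] at hcard
  rw [hN, Nat.add_sub_add_right, ← (hφ F _ hF).1, ← (hφ G _ hG).1]
  refine card_add_card_le_of_choose_lt_fin hba (by omega)
    (fun hb ↦ card_add_card_le_fin N (a + 1) b hb hba (by omega))
    (hφ F _ hF).2 (hφ G _ hG).2 ?_ ?_ (by rwa [(hφ F _ hF).1])
  · intro A hA B hB h
    exact hFG _ ((hmem F A).1 hA) _ ((hmem G B).1 hB) ((disjoint_map e).2 h)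
  · rw [← card_pos, (hφ G _ hG).1]; exact card_pos.2 hGne

/-- The link of `K` in `F`: the traces outside `K` of the members of `F` containing `K`. -/
def link (K : Finset ℕ) (F : Finset (Finset ℕ)) : Finset (Finset ℕ) :=
  (F.filter (K ⊆ ·)).image (· \ K)

theorem mem_link {K C : Finset ℕ} {F : Finset (Finset ℕ)} :
    C ∈ link K F ↔ ∃ A ∈ F, K ⊆ A ∧ A \ K = C := by
  simp [link, and_assoc]

theorem card_link (K : Finset ℕ) (F : Finset (Finset ℕ)) :
    #(link K F) = #(F.filter (K ⊆ ·)) := by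
  refine card_image_of_injOn fun A hA B hB h ↦ ?_
  have hA := (mem_filter.1 (mem_coe.1 hA)).2
  have hB := (mem_filter.1 (mem_coe.1 hB)).2
  rw [← sdiff_union_of_subset hA, ← sdiff_union_of_subset hB]
  exact congrArg (· ∪ K) h

theorem card_link_singleton (x : ℕ) (F : Finset (Finset ℕ)) :
    #(link {x} F) = #(F.filter (x ∈ ·)) := by
  simp [card_link]

theorem link_subset {V K : Finset ℕ} {k : ℕ} {F : Finset (Finset ℕ)}
    (hF : F ⊆ V.powersetCard k) : link K F ⊆ (V \ K).powersetCard (k - #K) := by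
  intro C hC
  obtain ⟨A, hA, hKA, rfl⟩ := mem_link.1 hC
  obtain ⟨hAV, hAk⟩ := mem_powersetCard.1 (hF hA)
  exact mem_powersetCard.2 ⟨sdiff_subset_sdiff hAV subset_rfl, by
    rw [card_sdiff_of_subset hKA, hAk]⟩

theorem filter_disjoint_subset {V K : Finset ℕ} {k : ℕ} {F : Finset (Finset ℕ)}
    (hF : F ⊆ V.powersetCard k) : F.filter (Disjoint K) ⊆ (V \ K).powersetCard k := by
  intro A hA
  obtain ⟨hA, hKA⟩ := mem_filter.1 hA
  obtain ⟨hAV, hAk⟩ := mem_powersetCard.1 (hF hA)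
  exact mem_powersetCard.2 ⟨subset_sdiff.2 ⟨hAV, hKA.symm⟩, hAk⟩

theorem not_disjoint_of_mem_link {K A B : Finset ℕ} {F G : Finset (Finset ℕ)}
    (hFG : ∀ A ∈ F, ∀ B ∈ G, ¬ Disjoint A B) (hA : A ∈ link K F)
    (hB : B ∈ G.filter (Disjoint K)) : ¬ Disjoint A B := by
  obtain ⟨A, hAF, hKA, rfl⟩ := mem_link.1 hA
  obtain ⟨hB, hKB⟩ := mem_filter.1 hB
  intro h
  refine hFG A hAF B hB ?_
  rw [← sdiff_union_of_subset hKA]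
  exact disjoint_union_left.2 ⟨h, hKB⟩

theorem filter_disjoint_singleton (x : ℕ) (F : Finset (Finset ℕ)) :
    F.filter (Disjoint {x}) = F.filter (x ∉ ·) := by
  simp

/-- Sets meeting both of two disjoint sets. -/
theorem card_add_choose_le_of_meets {W X Y : Finset ℕ} {k : ℕ} {F : Finset (Finset ℕ)}
    (hX : X ⊆ W) (hY : Y ⊆ W) (hXY : Disjoint X Y) (hF : F ⊆ W.powersetCard k)
    (hFX : ∀ A ∈ F, ¬ Disjoint A X) (hFY : ∀ A ∈ F, ¬ Disjoint A Y) :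
    #F + (#W - #X).choose k + (#W - #Y).choose k ≤
      (#W).choose k + (#W - #X - #Y).choose k := by
  have h1 : Disjoint F ((W \ X).powersetCard k ∪ (W \ Y).powersetCard k) := by
    rw [disjoint_left]
    intro A hA h
    rcases mem_union.1 h with h | h
    · exact hFX A hA (subset_sdiff.1 (mem_powersetCard.1 h).1).2
    · exact hFY A hA (subset_sdiff.1 (mem_powersetCard.1 h).1).2
  have h2 : F ∪ ((W \ X).powersetCard k ∪ (W \ Y).powersetCard k) ⊆ W.powersetCard k :=
    union_subset hF (union_subset (powersetCard_mono sdiff_subset)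
      (powersetCard_mono sdiff_subset))
  have h3 := card_le_card h2
  have h4 := card_union_add_card_inter ((W \ X).powersetCard k) ((W \ Y).powersetCard k)
  have h5 : (W \ X).powersetCard k ∩ (W \ Y).powersetCard k ⊆
      ((W \ X) \ Y).powersetCard k := by
    intro A hA
    simp only [mem_inter, mem_powersetCard, subset_sdiff] at hA ⊢
    tauto
  have h6 := card_le_card h5
  rw [card_union_of_disjoint h1] at h3
  have hYX : Y ⊆ W \ X := subset_sdiff.2 ⟨hY, hXY.symm⟩
  simp only [card_powersetCard, card_sdiff_of_subset hX, card_sdiff_of_subset hY,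
    card_sdiff_of_subset hYX] at *
  omega

/-- The contribution of the members of the two families whose traces on `K` are, respectively,
empty and everything. -/
theorem card_add_card_link_le {V K : Finset ℕ} {k l p : ℕ} (hlk : l ≤ k) (hn : k + l < #V)
    (hKV : K ⊆ V) (hp : #K = p) (hp1 : 1 ≤ p) (hpl : p < l)
    {F G : Finset (Finset ℕ)} (hF : F ⊆ (V \ K).powersetCard k)
    (hG : G ⊆ (V \ K).powersetCard (l - p)) (hFG : ∀ A ∈ F, ∀ B ∈ G, ¬ Disjoint A B)
    (hpF : 2 ≤ p ∨ F.Nonempty) (hntG : ∀ z, ∃ B ∈ G, z ∉ B)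
    (ih : (∀ z, ∃ A ∈ F, z ∉ A) → #F + #G + 2 * (#(V \ K) - (l - p)).choose k ≤
      (#(V \ K)).choose k + (#(V \ K) - 2 * (l - p)).choose k + 2) :
    #F + #G + (#V - l).choose k + (#V - p - l).choose k ≤
      (#V - p).choose k + (#V - 2 * l).choose k + 1 := by
  have hVK : #(V \ K) = #V - p := by rw [card_sdiff_of_subset hKV, hp]
  rw [hVK, show #V - p - (l - p) = #V - l by omega,
    show #V - p - 2 * (l - p) = #V - 2 * l + p by omega] at ih
  rw [show #V - p - l = #V - l - p by omega]
  by_cases hnt : ∀ z, ∃ A ∈ F, z ∉ A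
  · have h1 := ih hnt
    have h2 := choose_bound_nontrivial hp1 hpl hlk hn
    omega
  rcases F.eq_empty_or_nonempty with rfl | hFne
  · have h1 := card_le_card hG
    rw [card_powersetCard, hVK] at h1
    have h2 := choose_bound_empty (hpF.resolve_right (by simp)) hpl hlk hn
    rw [card_empty]
    omega
  push Not at hnt
  obtain ⟨z, hz⟩ := hnt
  obtain ⟨A, hA⟩ := hFne
  have hzV : z ∈ V \ K := (mem_powersetCard.1 (hF hA)).1 (hz A hA)
  have hW : #((V \ K) \ {z}) = #V - p - 1 := by
    rw [card_sdiff_of_subset (singleton_subset_iff.2 hzV), hVK, card_singleton]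
  have h1 := card_le_card (link_subset (K := {z}) hG)
  rw [card_link_singleton, card_powersetCard, hW, card_singleton] at h1
  have h2 := card_add_card_le_of_nonempty (V := (V \ K) \ {z}) (k := k - 1) (l := l - p)
    (by omega) (by omega) (by omega) (link_subset (K := {z}) hF)
    (filter_disjoint_subset (K := {z}) hG) (fun A hA B hB ↦ not_disjoint_of_mem_link hFG hA hB)
    ⟨A \ {z}, mem_link.2 ⟨A, hA, by simpa using hz A hA, rfl⟩⟩
    (by obtain ⟨B, hB, hzB⟩ := hntG z
        exact ⟨B, by simpa [hB] using hzB⟩)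
  rw [card_link_singleton, filter_disjoint_singleton, filter_true_of_mem hz, hW,
    show #V - p - 1 - (l - p) = #V - l - 1 by omega] at h2
  have h3 := choose_bound_star hp1 hpl hlk hn
  have h4 := card_filter_add_card_filter_not (s := G) (z ∈ ·)
  obtain ⟨k, rfl⟩ : ∃ k', k = k' + 1 := ⟨k - 1, by omega⟩
  obtain ⟨m, hm⟩ : ∃ m, #V - l = m + 1 := ⟨#V - l - 1, by omega⟩
  obtain ⟨m', hm'⟩ : ∃ m', #V - p = m' + 1 := ⟨#V - p - 1, by omega⟩
  rw [show #V - 1 - p = #V - p - 1 by omega] at h3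
  rw [hm, hm', Nat.choose_succ_succ' m, Nat.choose_succ_succ' m']
  simp only [hm, hm', Nat.add_sub_cancel] at h1 h2 h3 ⊢
  omega

theorem card_add_card_le_of_atom {V K : Finset ℕ} {k l x : ℕ} (hlk : l ≤ k) (hn : k + l < #V)
    {F G : Finset (Finset ℕ)} (hF : F ⊆ V.powersetCard k) (hG : G ⊆ V.powersetCard l)
    (hFG : ∀ A ∈ F, ∀ B ∈ G, ¬ Disjoint A B) (hntF : ∀ z, ∃ A ∈ F, z ∉ A)
    (hntG : ∀ z, ∃ B ∈ G, z ∉ B)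
    (ih : ∀ (V' : Finset ℕ) (l' : ℕ) (F' G' : Finset (Finset ℕ)), #V' < #V → 1 ≤ l' → l' ≤ k →
      k + l' < #V' → F' ⊆ V'.powersetCard k → G' ⊆ V'.powersetCard l' →
      (∀ A ∈ F', ∀ B ∈ G', ¬ Disjoint A B) → (∀ z, ∃ A ∈ F', z ∉ A) →
      (∀ z, ∃ B ∈ G', z ∉ B) → #F' + #G' + 2 * (#V' - l').choose k ≤
      (#V').choose k + (#V' - 2 * l').choose k + 2)
    (hxK : x ∈ K) (hxG : ∃ B ∈ G, x ∈ B) (hK : ∀ B ∈ G, x ∈ B → K ⊆ B)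
    (hK' : ∀ B ∈ G, x ∉ B → Disjoint K B) (hKmax : ∀ z, z ∉ K → ∃ B ∈ G, x ∈ B ∧ z ∉ B)
    (hbound : #(F.filter (x ∈ ·)) + #(G.filter (x ∉ ·)) + (#V - 1 - l).choose (k - 1) ≤
      (#V - 1).choose (k - 1) + 1) :
    #F + #G + 2 * (#V - l).choose k ≤ (#V).choose k + (#V - 2 * l).choose k + 2 := by
  obtain ⟨B₁, hB₁, hxB₁⟩ := hxG
  obtain ⟨B₂, hB₂, hxB₂⟩ := hntG x
  obtain ⟨hB₁V, hB₁l⟩ := mem_powersetCard.1 (hG hB₁)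
  obtain ⟨hB₂V, hB₂l⟩ := mem_powersetCard.1 (hG hB₂)
  have hKV : K ⊆ V := (hK B₁ hB₁ hxB₁).trans hB₁V
  have hxV : x ∈ V := hKV hxK
  obtain ⟨p, hp⟩ : ∃ p, #K = p := ⟨_, rfl⟩
  have hp1 : 1 ≤ p := hp ▸ card_pos.2 ⟨x, hxK⟩
  have hpl : p ≤ l := by rw [← hp, ← hB₁l]; exact card_le_card (hK B₁ hB₁ hxB₁)
  -- members of `F` which meet `K` but avoid `x`
  have hmeet : #((F.filter (x ∉ ·)).filter (¬ Disjoint K ·)) + (#V - p).choose k +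
      (#V - 1 - l).choose k ≤ (#V - 1).choose k + (#V - p - l).choose k := by
    have := card_add_choose_le_of_meets (W := V.erase x) (X := K.erase x) (Y := B₂) (k := k)
      (F := (F.filter (x ∉ ·)).filter (¬ Disjoint K ·)) (erase_subset_erase _ hKV)
      (subset_erase.2 ⟨hB₂V, hxB₂⟩) ((hK' B₂ hB₂ hxB₂).mono_left (erase_subset _ _)) ?_ ?_ ?_
    · rw [card_erase_of_mem hxV, card_erase_of_mem hxK, hp, hB₂l,
        show #V - 1 - (p - 1) = #V - p by omega] at this
      exact this
    · intro A hA
      simp only [mem_filter] at hA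
      obtain ⟨hAV, hAk⟩ := mem_powersetCard.1 (hF hA.1.1)
      exact mem_powersetCard.2 ⟨subset_erase.2 ⟨hAV, hA.1.2⟩, hAk⟩
    · intro A hA h
      simp only [mem_filter] at hA
      refine hA.2 ?_
      rw [← insert_erase hxK]
      exact disjoint_insert_left.2 ⟨hA.1.2, h.symm⟩
    · intro A hA
      simp only [mem_filter] at hA
      exact hFG A hA.1.1 B₂ hB₂
  have hlinkG : G.filter (x ∈ ·) = G.filter (K ⊆ ·) :=
    filter_congr fun B hB ↦ ⟨hK B hB, fun h ↦ h hxK⟩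
  have hF₂ : (F.filter (x ∉ ·)).filter (Disjoint K ·) = F.filter (Disjoint K) := by
    rw [filter_filter]
    exact filter_congr fun A _ ↦ ⟨fun h ↦ h.2, fun h ↦ ⟨disjoint_left.1 h hxK, h⟩⟩
  have hsplit₁ := card_filter_add_card_filter_not (s := F) (x ∈ ·)
  have hsplit₂ := card_filter_add_card_filter_not (s := F.filter (x ∉ ·)) (Disjoint K ·)
  have hsplit₃ := card_filter_add_card_filter_not (s := G) (x ∈ ·)
  have hrest : #(F.filter (Disjoint K)) + #(G.filter (x ∈ ·)) + (#V - l).choose k +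
      (#V - p - l).choose k ≤ (#V - p).choose k + (#V - 2 * l).choose k + 1 := by
    have hcross : ∀ A ∈ F.filter (Disjoint K), ∀ B ∈ link K G, ¬ Disjoint A B :=
      fun A hA B hB h ↦ not_disjoint_of_mem_link (fun B hB A hA h ↦ hFG A hA B hB h.symm)
        hB hA h.symm
    rcases hpl.eq_or_lt with rfl | hpl
    · have hKB : ∀ B ∈ G, x ∈ B → K = B := fun B hB hxB ↦ eq_of_subset_of_card_le (hK B hB hxB)
        (by rw [(mem_powersetCard.1 (hG hB)).2, hp])
      have h1 : F.filter (Disjoint K) = ∅ := by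
        refine filter_eq_empty_iff.2 fun A hA h ↦ hFG A hA B₁ hB₁ ?_
        rw [← hKB B₁ hB₁ hxB₁]
        exact h.symm
      have h2 : G.filter (x ∈ ·) ⊆ {K} := fun B hB ↦
        mem_singleton.2 (hKB B (mem_filter.1 hB).1 (mem_filter.1 hB).2).symm
      have h3 := card_le_card h2
      rw [card_singleton] at h3
      rw [h1, card_empty, show #V - p - p = #V - 2 * p by omega]
      omega
    · rw [hlinkG, ← card_link]
      have hlG := link_subset (K := K) hG
      rw [hp] at hlG
      have hntl : ∀ z, ∃ B ∈ link K G, z ∉ B := by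
        intro z
        by_cases hz : z ∈ K
        · exact ⟨B₁ \ K, mem_link.2 ⟨B₁, hB₁, hK B₁ hB₁ hxB₁, rfl⟩, by simp [hz]⟩
        · obtain ⟨B, hB, hxB, hzB⟩ := hKmax z hz
          exact ⟨B \ K, mem_link.2 ⟨B, hB, hK B hB hxB, rfl⟩, by simp [hzB]⟩
      refine card_add_card_link_le hlk hn hKV hp hp1 hpl (filter_disjoint_subset hF)
        hlG hcross ?_ hntl ?_
      · by_contra! h
        obtain rfl : p = 1 := by omega
        obtain ⟨y, hy⟩ := card_eq_one.1 hp
        obtain rfl : x = y := by rw [hy] at hxK; exact mem_singleton.1 hxK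
        obtain ⟨A, hA, hxA⟩ := hntF x
        have : A ∈ F.filter (Disjoint K) := by rw [hy]; simp [hA, hxA]
        rw [h.2] at this
        exact notMem_empty _ this
      · have hVK : #(V \ K) = #V - p := by rw [card_sdiff_of_subset hKV, hp]
        exact fun hnt ↦ ih (V \ K) (l - p) _ _ (by omega) (by omega) (by omega) (by omega)
          (filter_disjoint_subset hF) hlG hcross hnt hntl
  obtain ⟨k, rfl⟩ : ∃ k', k = k' + 1 := ⟨k - 1, by omega⟩
  obtain ⟨m, hm⟩ : ∃ m, #V = m + 1 := ⟨#V - 1, by omega⟩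
  obtain ⟨m', hm'⟩ : ∃ m', #V - l = m' + 1 := ⟨#V - l - 1, by omega⟩
  rw [hF₂] at hsplit₂
  have h1 := Nat.choose_succ_succ' m k
  have h2 := Nat.choose_succ_succ' m' k
  rw [← hm] at h1
  rw [← hm', show m' = #V - 1 - l by omega] at h2
  rw [show m = #V - 1 by omega] at h1
  simp only [Nat.add_sub_cancel] at hbound
  omega

theorem degree_bound_of_lt {V : Finset ℕ} {k l x : ℕ} (hl : 1 ≤ l) (hlk : l < k)
    (hn : k + l < #V) {F G : Finset (Finset ℕ)} (hF : F ⊆ V.powersetCard k)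
    (hG : G ⊆ V.powersetCard l) (hFG : ∀ A ∈ F, ∀ B ∈ G, ¬ Disjoint A B) (hxV : x ∈ V)
    (hntG : ∃ B ∈ G, x ∉ B) (hxF : 0 < #(F.filter (x ∈ ·))) :
    #(F.filter (x ∈ ·)) + #(G.filter (x ∉ ·)) + (#V - 1 - l).choose (k - 1) ≤
      (#V - 1).choose (k - 1) + 1 := by
  have hW : #(V \ {x}) = #V - 1 := by
    rw [card_sdiff_of_subset (singleton_subset_iff.2 hxV), card_singleton]
  rw [← card_link_singleton] at hxF ⊢
  rw [← filter_disjoint_singleton, ← hW]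
  obtain ⟨B, hB, hxB⟩ := hntG
  exact card_add_card_le_of_nonempty hl (by omega) (by omega) (link_subset (K := {x}) hF)
    (filter_disjoint_subset hG) (fun A hA B hB ↦ not_disjoint_of_mem_link hFG hA hB)
    (card_pos.1 hxF) ⟨B, by simpa [hB] using hxB⟩

theorem degree_bound_of_choose_lt {V : Finset ℕ} {k x : ℕ} (hk : 2 ≤ k)
    (hn : k + k < #V) {F G : Finset (Finset ℕ)} (hF : F ⊆ V.powersetCard k)
    (hG : G ⊆ V.powersetCard k) (hFG : ∀ A ∈ F, ∀ B ∈ G, ¬ Disjoint A B) (hxV : x ∈ V)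
    (hntG : ∃ B ∈ G, x ∉ B) (hxF : (#V - 2).choose (k - 2) < #(F.filter (x ∈ ·))) :
    #(F.filter (x ∈ ·)) + #(G.filter (x ∉ ·)) + (#V - 1 - k).choose (k - 1) ≤
      (#V - 1).choose (k - 1) + 1 := by
  have hW : #(V \ {x}) = #V - 1 := by
    rw [card_sdiff_of_subset (singleton_subset_iff.2 hxV), card_singleton]
  rw [← card_link_singleton] at hxF ⊢
  rw [← filter_disjoint_singleton, ← hW]
  obtain ⟨B, hB, hxB⟩ := hntG
  obtain ⟨k, rfl⟩ : ∃ k', k = k' + 2 := ⟨k - 2, by omega⟩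
  exact card_add_card_le_of_choose_lt (a := k) (b := k + 1) (by omega) (by omega)
    (link_subset (K := {x}) hF)
    (filter_disjoint_subset hG) (fun A hA B hB ↦ not_disjoint_of_mem_link hFG hA hB)
    ⟨B, by simpa [hB] using hxB⟩ (by rw [hW]; exact hxF)

/-- If every member of `G` containing `y` contains `z`, then shifting `y` to `z` maps a maximal
`F` into itself, so that the degree of `z` is at least that of `y`. -/
theorem card_filter_mem_le_of_imp {V : Finset ℕ} {k y z : ℕ} {F G : Finset (Finset ℕ)}
    (hF : F ⊆ V.powersetCard k) (hFG : ∀ A ∈ F, ∀ B ∈ G, ¬ Disjoint A B)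
    (hmax : ∀ A ∈ V.powersetCard k, (∀ B ∈ G, ¬ Disjoint A B) → A ∈ F) (hz : z ∈ V)
    (hyz : ∀ B ∈ G, y ∈ B → z ∈ B) :
    #(F.filter (y ∈ ·)) ≤ #(F.filter (z ∈ ·)) := by
  rcases eq_or_ne y z with rfl | hne
  · rfl
  have h1 := card_filter_add_card_filter_not (s := F.filter (y ∈ ·)) (z ∈ ·)
  have h2 := card_filter_add_card_filter_not (s := F.filter (z ∈ ·)) (y ∈ ·)
  have h3 : (F.filter (y ∈ ·)).filter (z ∈ ·) = (F.filter (z ∈ ·)).filter (y ∈ ·) :=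
    filter_comm _ _ _
  have h4 : #((F.filter (y ∈ ·)).filter (z ∉ ·)) ≤ #((F.filter (z ∈ ·)).filter (y ∉ ·)) := by
    refine card_le_card_of_injOn (fun A ↦ insert z (A.erase y)) ?_ ?_
    · intro A hA
      simp only [coe_filter, mem_filter, Set.mem_ofPred_eq] at hA
      obtain ⟨⟨hA, hyA⟩, hzA⟩ := hA
      obtain ⟨hAV, hAk⟩ := mem_powersetCard.1 (hF hA)
      have hzA' : z ∉ A.erase y := fun h ↦ hzA (mem_of_mem_erase h)
      simp only [coe_filter, mem_filter, Set.mem_ofPred_eq, mem_insert_self, and_true]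
      refine ⟨hmax _ (mem_powersetCard.2 ⟨?_, ?_⟩) ?_, by simp [hne]⟩
      · exact insert_subset hz ((erase_subset _ _).trans hAV)
      · rw [card_insert_of_notMem hzA', card_erase_add_one hyA, hAk]
      · intro B hB h
        obtain ⟨hzB, h⟩ := disjoint_insert_left.1 h
        refine hFG A hA B hB ?_
        rw [← insert_erase hyA]
        exact disjoint_insert_left.2 ⟨fun hyB ↦ hzB (hyz B hB hyB), h⟩
    · intro A hA A' hA' h
      simp only [coe_filter, mem_filter, Set.mem_ofPred_eq] at hA hA'
      have h' := congrArg (erase · z) h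
      simp only at h'
      rw [erase_insert (fun h ↦ hA.2 (mem_of_mem_erase h)),
        erase_insert (fun h ↦ hA'.2 (mem_of_mem_erase h))] at h'
      rw [← insert_erase hA.1.2, ← insert_erase hA'.1.2, h']
  rw [h3] at h1
  omega

theorem exists_atom {V : Finset ℕ} {k l y : ℕ} (hl : 1 ≤ l) {F G : Finset (Finset ℕ)}
    (hF : F ⊆ V.powersetCard k) (hG : G ⊆ V.powersetCard l)
    (hFG : ∀ A ∈ F, ∀ B ∈ G, ¬ Disjoint A B)
    (hmax : ∀ A ∈ V.powersetCard k, (∀ B ∈ G, ¬ Disjoint A B) → A ∈ F)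
    (hGne : G.Nonempty) :
    ∃ x ∈ V, ∃ K : Finset ℕ, x ∈ K ∧ (∃ B ∈ G, x ∈ B) ∧ (∀ B ∈ G, x ∈ B → K ⊆ B) ∧
      (∀ B ∈ G, x ∉ B → Disjoint K B) ∧ (∀ z, z ∉ K → ∃ B ∈ G, x ∈ B ∧ z ∉ B) ∧
      #(F.filter (y ∈ ·)) ≤ #(F.filter (x ∈ ·)) := by
  have hGV : ∀ B ∈ G, B ⊆ V := fun B hB ↦ (mem_powersetCard.1 (hG hB)).1
  set up : ℕ → Finset ℕ := fun y ↦ V.filter (fun z ↦ ∀ B ∈ G, y ∈ B → z ∈ B) with hup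
  have mem_up : ∀ y z, z ∈ up y ↔ z ∈ V ∧ ∀ B ∈ G, y ∈ B → z ∈ B := by simp [hup]
  have hne : ((up y).filter (fun z ↦ ∃ B ∈ G, z ∈ B)).Nonempty := by
    by_cases hy : ∃ B ∈ G, y ∈ B
    · obtain ⟨B, hB, hyB⟩ := hy
      exact ⟨y, mem_filter.2 ⟨(mem_up y y).2 ⟨hGV B hB hyB, fun _ _ h ↦ h⟩, B, hB, hyB⟩⟩
    · push Not at hy
      obtain ⟨B, hB⟩ := hGne
      obtain ⟨z, hz⟩ : B.Nonempty := card_pos.1 (by rw [(mem_powersetCard.1 (hG hB)).2]; omega)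
      exact ⟨z, mem_filter.2 ⟨(mem_up y z).2 ⟨hGV B hB hz, fun C hC h ↦ absurd h (hy C hC)⟩,
        B, hB, hz⟩⟩
  obtain ⟨x, hx, hxmin⟩ := exists_min_image _ (fun z ↦ #(up z)) hne
  obtain ⟨hxy, hxG⟩ := mem_filter.1 hx
  obtain ⟨hxV, hyx⟩ := (mem_up y x).1 hxy
  refine ⟨x, hxV, up x, (mem_up x x).2 ⟨hxV, fun _ _ h ↦ h⟩, hxG,
    fun B hB hxB z hz ↦ ((mem_up x z).1 hz).2 B hB hxB, ?_, ?_,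
    card_filter_mem_le_of_imp hF hFG hmax hxV hyx⟩
  · intro B hB hxB
    rw [disjoint_left]
    intro w hw hwB
    obtain ⟨hwV, hxw⟩ := (mem_up x w).1 hw
    have hle := hxmin w (mem_filter.2 ⟨(mem_up y w).2 ⟨hwV, fun C hC h ↦ hxw C hC (hyx C hC h)⟩,
      B, hB, hwB⟩)
    have hss : up w ⊂ up x := by
      refine (ssubset_iff_of_subset fun v hv ↦ ?_).2
        ⟨x, (mem_up x x).2 ⟨hxV, fun _ _ h ↦ h⟩, fun h ↦ hxB (((mem_up w x).1 h).2 B hB hwB)⟩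
      obtain ⟨hvV, hwv⟩ := (mem_up w v).1 hv
      exact (mem_up x v).2 ⟨hvV, fun C hC h ↦ hwv C hC (hxw C hC h)⟩
    exact absurd (card_lt_card hss) (not_lt.2 hle)
  · intro z hz
    by_contra! h
    obtain ⟨B, hB, hxB⟩ := hxG
    exact hz ((mem_up x z).2 ⟨hGV B hB (h B hB hxB), h⟩)

theorem card_le_mul_of_degree_le {F : Finset (Finset ℕ)} {B : Finset ℕ} {D : ℕ}
    (hB : ∀ A ∈ F, ¬ Disjoint A B) (hD : ∀ x, #(F.filter (x ∈ ·)) ≤ D) : #F ≤ #B * D := by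
  have h : F ⊆ B.biUnion fun x ↦ F.filter (x ∈ ·) := by
    intro A hA
    obtain ⟨x, hxA, hxB⟩ := not_disjoint_iff.1 (hB A hA)
    exact mem_biUnion.2 ⟨x, hxB, mem_filter.2 ⟨hA, hxA⟩⟩
  exact (card_le_card h).trans (card_biUnion_le_card_mul _ _ _ fun x _ ↦ hD x)

theorem mul_card_le_mul_of_degree_le {F : Finset (Finset ℕ)} {V : Finset ℕ} {k D : ℕ}
    (hF : F ⊆ V.powersetCard k) (hD : ∀ x, #(F.filter (x ∈ ·)) ≤ D) : k * #F ≤ #V * D := by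
  have h := sum_card_bipartiteAbove_eq_sum_card_bipartiteBelow (s := V) (t := F)
    (fun x A ↦ x ∈ A)
  have h1 : ∀ A ∈ F, #(bipartiteBelow (fun x A ↦ x ∈ A) V A) = k := by
    intro A hA
    obtain ⟨hAV, hAk⟩ := mem_powersetCard.1 (hF hA)
    rw [← hAk, bipartiteBelow, filter_mem_eq_inter, inter_eq_right.2 hAV]
  rw [sum_congr rfl h1, sum_const, smul_eq_mul] at h
  rw [mul_comm, ← h, ← smul_eq_mul, ← sum_const]
  exact sum_le_sum fun x _ ↦ hD x

theorem card_add_card_le_of_nontrivial (k : ℕ) (V : Finset ℕ) (l : ℕ)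
    (F G : Finset (Finset ℕ)) (hl : 1 ≤ l) (hlk : l ≤ k)
    (hn : k + l < #V) (hF : F ⊆ V.powersetCard k) (hG : G ⊆ V.powersetCard l)
    (hFG : ∀ A ∈ F, ∀ B ∈ G, ¬ Disjoint A B) (hntF : ∀ z, ∃ A ∈ F, z ∉ A)
    (hntG : ∀ z, ∃ B ∈ G, z ∉ B) :
    #F + #G + 2 * (#V - l).choose k ≤ (#V).choose k + (#V - 2 * l).choose k + 2 := by
  induction hN : #V using Nat.strong_induction_on generalizing V l F G with
  | _ N ih =>
  subst hN
  replace ih := fun (V' : Finset ℕ) (l' : ℕ) (F' G' : Finset (Finset ℕ)) (h : #V' < #V) h1 h2 h3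
    h4 h5 h6 h7 h8 ↦ ih (#V') h V' l' F' G' h1 h2 h3 h4 h5 h6 h7 h8 rfl
  -- pass to maximal families
  wlog hmaxF : ∀ A ∈ V.powersetCard k, (∀ B ∈ G, ¬ Disjoint A B) → A ∈ F generalizing F with H
  · set F₁ := (V.powersetCard k).filter (fun A ↦ ∀ B ∈ G, ¬ Disjoint A B)
    have hFF₁ : F ⊆ F₁ := fun A hA ↦ mem_filter.2 ⟨hF hA, hFG A hA⟩
    have := H F₁ (filter_subset _ _) (fun A hA ↦ (mem_filter.1 hA).2)
      (fun z ↦ (hntF z).imp fun A hA ↦ ⟨hFF₁ hA.1, hA.2⟩)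
      (fun A hA h ↦ mem_filter.2 ⟨hA, h⟩)
    have := card_le_card hFF₁
    omega
  wlog hmaxG : ∀ B ∈ V.powersetCard l, (∀ A ∈ F, ¬ Disjoint B A) → B ∈ G generalizing G with H
  · set G₁ := (V.powersetCard l).filter (fun B ↦ ∀ A ∈ F, ¬ Disjoint B A)
    have hGG₁ : G ⊆ G₁ := fun B hB ↦ mem_filter.2 ⟨hG hB, fun A hA h ↦ hFG A hA B hB h.symm⟩
    have := H G₁ (filter_subset _ _) (fun z ↦ (hntG z).imp fun A hA ↦ ⟨hGG₁ hA.1, hA.2⟩)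
      (fun A hA B hB h ↦ (mem_filter.1 hB).2 A hA h.symm)
      (fun A hA h ↦ hmaxF A hA fun B hB ↦ h B (hGG₁ hB))
      (fun B hB h ↦ mem_filter.2 ⟨hB, h⟩)
    have := card_le_card hGG₁
    omega
  obtain ⟨A₀, hA₀, -⟩ := hntF 0
  obtain ⟨B₀, hB₀, -⟩ := hntG 0
  rcases hlk.lt_or_eq with hlk' | rfl
  · obtain ⟨y, hyA, -⟩ := not_disjoint_iff.1 (hFG A₀ hA₀ B₀ hB₀)
    obtain ⟨x, hxV, K, hxK, hxG, hK, hK', hKmax, hdeg⟩ :=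
      exists_atom (y := y) hl hF hG hFG hmaxF ⟨B₀, hB₀⟩
    refine card_add_card_le_of_atom hlk hn hF hG hFG hntF hntG ih hxK hxG hK hK' hKmax
      (degree_bound_of_lt hl hlk' hn hF hG hFG hxV (hntG x) (lt_of_lt_of_le ?_ hdeg))
    exact card_pos.2 ⟨A₀, mem_filter.2 ⟨hA₀, hyA⟩⟩
  have hl2 : 2 ≤ l := by
    by_contra h
    obtain rfl : l = 1 := by omega
    obtain ⟨b, rfl⟩ := card_eq_one.1 (mem_powersetCard.1 (hG hB₀)).2
    obtain ⟨A, hA, hbA⟩ := hntF b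
    exact hFG A hA _ hB₀ (disjoint_singleton_right.2 hbA)
  have hGF : ∀ B ∈ G, ∀ A ∈ F, ¬ Disjoint B A := fun B hB A hA h ↦ hFG A hA B hB h.symm
  by_cases hdF : ∀ y, #(F.filter (y ∈ ·)) ≤ (#V - 2).choose (l - 2)
  · by_cases hdG : ∀ y, #(G.filter (y ∈ ·)) ≤ (#V - 2).choose (l - 2)
    · have hF1 := card_le_mul_of_degree_le (fun A hA ↦ hFG A hA B₀ hB₀) hdF
      have hG1 := card_le_mul_of_degree_le (fun B hB ↦ hGF B hB A₀ hA₀) hdG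
      have hF2 := mul_card_le_mul_of_degree_le hF hdF
      have hG2 := mul_card_le_mul_of_degree_le hG hdG
      rw [(mem_powersetCard.1 (hG hB₀)).2] at hF1
      rw [(mem_powersetCard.1 (hF hA₀)).2] at hG1
      rcases choose_low_degree hl2 (show 2 * l + 1 ≤ #V by omega) with h | h
      · omega
      · refine Nat.le_of_mul_le_mul_left (le_trans ?_ h) (show 0 < l by omega)
        rw [mul_add, mul_add]
        omega
    · push Not at hdG
      obtain ⟨y, hy⟩ := hdG
      obtain ⟨x, hxV, K, hxK, hxG, hK, hK', hKmax, hdeg⟩ :=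
        exists_atom (y := y) hl hG hF hGF hmaxG ⟨A₀, hA₀⟩
      have := card_add_card_le_of_atom hlk hn hG hF hGF hntG hntF ih hxK hxG hK hK' hKmax
        (degree_bound_of_choose_lt hl2 hn hG hF hGF hxV (hntF x) (hy.trans_le hdeg))
      omega
  · push Not at hdF
    obtain ⟨y, hy⟩ := hdF
    obtain ⟨x, hxV, K, hxK, hxG, hK, hK', hKmax, hdeg⟩ :=
      exists_atom (y := y) hl hF hG hFG hmaxF ⟨B₀, hB₀⟩
    exact card_add_card_le_of_atom hlk hn hF hG hFG hntF hntG ih hxK hxG hK hK' hKmax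
      (degree_bound_of_choose_lt hl2 hn hF hG hFG hxV (hntG x) (hy.trans_le hdeg))

end CrossIntersecting

/-- Theorem 4.1: the maximum of |F| + |G| for non-trivial cross-intersecting
families of uniformities k and ℓ. -/
theorem stmt15 (n k l : ℕ) (hl : 2 ≤ l) (hlk : l ≤ k) (hn : k + l < n)
    (F G : Finset (Finset ℕ))
    (hF : F ⊆ (Finset.Icc 1 n).powersetCard k)
    (hG : G ⊆ (Finset.Icc 1 n).powersetCard l)
    (hcross : ∀ A ∈ F, ∀ B ∈ G, (A ∩ B).Nonempty)
    (hntF : ∀ x : ℕ, ∃ A ∈ F, x ∉ A)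
    (hntG : ∀ x : ℕ, ∃ B ∈ G, x ∉ B) :
    (F.card + G.card : ℤ) ≤
      (n.choose k : ℤ) - 2 * (n - l).choose k + (n - 2 * l).choose k + 2 := by
  have h := CrossIntersecting.card_add_card_le_of_nontrivial k (Finset.Icc 1 n) l F G (by omega) hlk
    (by simpa using hn) hF hG
    (fun A hA B hB ↦ Finset.not_disjoint_iff_nonempty_inter.2 (hcross A hA B hB)) hntF hntG
  rw [Nat.card_Icc, Nat.add_sub_cancel] at h
  omega
end
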